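/- (Sharkovskiĭ theorem for S(Ω).) If a map F ∈ S(Ω) has a p-periodic strip, then F has a q-periodic strip for every q ∈ ℕ with p >_Sh q in the Sharkovskiĭ ordering. -/

import Mathlib

open Dynamics Set

noncomputable section

/-- The circle `S¹ = ℝ/ℤ`. -/
abbrev S1 : Type := AddCircle (1 : ℝ)

/-- The unit interval `I = [0,1]` as a type. -/
abbrev II : Type := Set.Icc (0 : ℝ) 1

/-- The cylinder `Ω = S¹ × I`. -/
abbrev Cyl : Type := S1 × II

/-- The fiber of a subset of the cylinder over `θ ∈ S¹`. -/
def fiber (A : Set Cyl) (θ : S1) : Set II := {x : II | (θ, x) ∈ A}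

/-- `M_A θ = max {x ∈ I : (θ, x) ∈ A}`. -/
def MA (A : Set Cyl) (θ : S1) : ℝ := sSup (Subtype.val '' fiber A θ)

/-- `m_A θ = min {x ∈ I : (θ, x) ∈ A}`. -/
def mA (A : Set Cyl) (θ : S1) : ℝ := sInf (Subtype.val '' fiber A θ)

/-- A strip: a closed set projecting onto all of `S¹` whose fibers over a residual
set of `θ`'s are (possibly degenerate) nonempty closed intervals. -/
def IsStrip (A : Set Cyl) : Prop :=
  IsClosed A ∧ (∀ θ : S1, ∃ x : II, (θ, x) ∈ A) ∧
    ∃ G ∈ residual S1, ∀ θ ∈ G, ∃ a b : II, a ≤ b ∧ fiber A θ = Set.Icc a b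

/-- `A < B` for strips. -/
def stripLT (A B : Set Cyl) : Prop := ∃ G ∈ residual S1, ∀ θ ∈ G, MA A θ < mA B θ

/-- `A ≤ B` for strips. -/
def stripLE (A B : Set Cyl) : Prop := ∃ G ∈ residual S1, ∀ θ ∈ G, MA A θ ≤ mA B θ

/-- Two strips are ordered if `A < B` or `B < A`. -/
def StripOrdered (A B : Set Cyl) : Prop := stripLT A B ∨ stripLT B A

/-- Two strips are weakly ordered if `A ≤ B` or `B ≤ A`. -/
def StripWeaklyOrdered (A B : Set Cyl) : Prop := stripLE A B ∨ stripLE B A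

/-- The class `S(Ω)` of quasiperiodically forced skew-products on the cylinder:
continuous maps whose first coordinate is an irrational rotation. -/
def IsQPF (F : Cyl → Cyl) : Prop :=
  Continuous F ∧ ∃ ω : ℝ, Irrational ω ∧ ∀ p : Cyl, (F p).1 = p.1 + (ω : S1)

/-- `B` is an `n`-periodic strip of `F`: `F^n(B) = B` and the iterates
`B, F(B), …, F^{n-1}(B)` are pairwise disjoint and pairwise ordered. -/
def IsPeriodicStripOrbit (F : Cyl → Cyl) (n : ℕ) (B : Set Cyl) : Prop :=
  IsStrip B ∧ F^[n] '' B = B ∧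
    ∀ i j : ℕ, i < j → j < n →
      Disjoint (F^[i] '' B) (F^[j] '' B) ∧ StripOrdered (F^[i] '' B) (F^[j] '' B)

/-- A cyclic permutation: the (forward) orbit of any point is everything. -/
def IsCyclicPerm {n : ℕ} (τ : Equiv.Perm (Fin n)) : Prop :=
  ∀ i j : Fin n, ∃ k : ℕ, (τ ^ k) i = j

/-- `F` exhibits the strips pattern `τ`: it has a periodic orbit of strips,
spatially labelled, moved around according to `τ`. -/
def ExhibitsStripPattern (F : Cyl → Cyl) {n : ℕ} (τ : Equiv.Perm (Fin n)) : Prop :=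
  ∃ B : Fin n → Set Cyl,
    (∀ i, IsStrip (B i)) ∧
    (∀ i j : Fin n, i < j → stripLT (B i) (B j)) ∧
    (Pairwise fun i j => Disjoint (B i) (B j)) ∧
    (∀ i, F '' B i = B (τ i))

/-- A continuous interval map has a periodic orbit with interval pattern `τ`. -/
def HasIntervalPattern (f : II → II) {n : ℕ} (τ : Equiv.Perm (Fin n)) : Prop :=
  ∃ p : Fin n → II, StrictMono p ∧ ∀ i, f (p i) = p (τ i)

/-- `τ` forces `ν` as interval patterns. -/
def ForcesI {n m : ℕ} (τ : Equiv.Perm (Fin n)) (ν : Equiv.Perm (Fin m)) : Prop :=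
  ∀ f : II → II, Continuous f → HasIntervalPattern f τ → HasIntervalPattern f ν

/-- `τ` forces `ν` in `Ω`. -/
def ForcesOmega {n m : ℕ} (τ : Equiv.Perm (Fin n)) (ν : Equiv.Perm (Fin m)) : Prop :=
  ∀ F : Cyl → Cyl, IsQPF F → ExhibitsStripPattern F τ → ExhibitsStripPattern F ν

/-- `p >_Sh q` in the Sharkovskiĭ ordering. -/
def SharkGT (p q : ℕ) : Prop :=
  ∃ i m j l : ℕ, Odd m ∧ Odd l ∧ p = 2 ^ i * m ∧ q = 2 ^ j * l ∧
    ((m = 1 ∧ l = 1 ∧ j < i) ∨ (1 < m ∧ l = 1) ∨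
      (1 < m ∧ 1 < l ∧ (i < j ∨ (i = j ∧ m < l))))

/-- The core of a subset of the cylinder. -/
def core (M : Set Cyl) : Set Cyl :=
  ⋂ (G : Set S1) (_ : G ∈ residual S1), closure (M ∩ Prod.fst ⁻¹' G)

/-- A band is a strip equal to its core. -/
def IsBand (A : Set Cyl) : Prop := IsStrip A ∧ core A = A

/-- Continuity points of a real-valued function on the circle. -/
def contPts (g : S1 → ℝ) : Set S1 := {θ | ContinuousAt g θ}

/-- The top cover `A⁺` of a strip: the closure of the graph of `M_A` restricted to its
residual set of continuity points. -/
def topCover (A : Set Cyl) : Set Cyl :=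
  closure {p : Cyl | p.1 ∈ contPts (MA A) ∧ (p.2 : ℝ) = MA A p.1}

/-- The bottom cover `A⁻` of a strip. -/
def botCover (A : Set Cyl) : Set Cyl :=
  closure {p : Cyl | p.1 ∈ contPts (mA A) ∧ (p.2 : ℝ) = mA A p.1}

/-- `A` positively `F`-covers `B`. -/
def FCoversPos (F : Cyl → Cyl) (A B : Set Cyl) : Prop :=
  stripLE (F '' botCover A) (botCover B) ∧ stripLE (topCover B) (F '' topCover A)

/-- `A` negatively `F`-covers `B`. -/
def FCoversNeg (F : Cyl → Cyl) (A B : Set Cyl) : Prop :=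
  stripLE (topCover B) (F '' botCover A) ∧ stripLE (F '' topCover A) (botCover B)

/-- `A` `F`-covers `B`. -/
def FCovers (F : Cyl → Cyl) (A B : Set Cyl) : Prop := FCoversPos F A B ∨ FCoversNeg F A B

/-- An `s`-horseshoe `(J, D)` for `F`. -/
def IsHorseshoe (F : Cyl → Cyl) (s : ℕ) (J : Set Cyl) (D : Finset (Set Cyl)) : Prop :=
  2 ≤ s ∧ D.card = s ∧ IsBand J ∧
    (∀ L ∈ D, IsBand L ∧ (interior L).Nonempty ∧ FCovers F L J) ∧
    (∀ L ∈ D, ∀ L' ∈ D, L ≠ L' → StripWeaklyOrdered L L')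

/-- Topological entropy (cover entropy of the whole space). -/
def hTop {X : Type} [UniformSpace X] (F : X → X) : EReal := coverEntropy F Set.univ

/-- A pseudo-curve: the closure of the graph of a continuous map from a residual
subset of the circle to the interval. -/
def IsPseudoCurve (A : Set Cyl) : Prop :=
  ∃ G ∈ residual S1, ∃ φ : S1 → II, Continuous (G.restrict φ) ∧
    A = closure {p : Cyl | p.1 ∈ G ∧ p.2 = φ p.1}

/-- The band `E_{AB}` between two pseudo-curves `A < B`. -/
def bandBetween (A B : Set Cyl) : Set Cyl :=
  closure {p : Cyl | p.1 ∈ contPts (MA A) ∧ p.1 ∈ contPts (mA B) ∧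
    MA A p.1 < (p.2 : ℝ) ∧ (p.2 : ℝ) < mA B p.1}

/-- `f` is affine on the subinterval `[a, b]` of `I`. -/
def AffineOnIcc (f : II → II) (a b : II) : Prop :=
  ∀ x : II, a ≤ x → x ≤ b →
    ((b : ℝ) - (a : ℝ)) * ((f x : ℝ) - (f a : ℝ)) =
      ((x : ℝ) - (a : ℝ)) * ((f b : ℝ) - (f a : ℝ))

/-- `f` is the `P`-linear (connect-the-dots) map over the points `p 0 < p 1 < … < p n`:
continuous, affine on each `[p i, p (i+1)]` and constant on both components of
`I ∖ [p 0, p n]`. -/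
def IsPLinear {n : ℕ} (f : II → II) (p : Fin (n + 1) → II) : Prop :=
  Continuous f ∧
    (∀ k : Fin n, AffineOnIcc f (p k.castSucc) (p k.succ)) ∧
    (∀ x : II, x ≤ p 0 → f x = f (p 0)) ∧
    (∀ x : II, p (Fin.last n) ≤ x → f x = f (p (Fin.last n)))

/-- Signed arrow between basic intervals `J_k = [p k, p (k+1)]` and `J_l` in the
`P`-signed Markov graph of `f` (`true` = positive covering, `false` = negative). -/
def IArrow {n : ℕ} (f : II → II) (p : Fin (n + 1) → II) (s : Bool) (k l : Fin n) : Prop :=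
  if s then
    (f (p k.castSucc) : ℝ) ≤ (p l.castSucc : ℝ) ∧ (p l.succ : ℝ) ≤ (f (p k.succ) : ℝ)
  else
    (f (p k.succ) : ℝ) ≤ (p l.castSucc : ℝ) ∧ (p l.succ : ℝ) ≤ (f (p k.castSucc) : ℝ)

/-- A loop of length `m` in the `P`-signed Markov graph of `f`, encoded as `m`-periodic
sequences of vertices (basic intervals) and signs. -/
def IsILoop {n : ℕ} (f : II → II) (p : Fin (n + 1) → II) (m : ℕ)
    (v : ℕ → Fin n) (s : ℕ → Bool) : Prop :=
  0 < m ∧ (∀ i, v (i + m) = v i) ∧ (∀ i, s (i + m) = s i) ∧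
    ∀ i, IArrow f p (s i) (v i) (v (i + 1))

/-- A periodic point `x` of (exact) period `m` is associated to the loop with vertex
sequence `v` if `f^i(x) ∈ J_{v i}` for all `i`. -/
def IAssocPt {n : ℕ} (f : II → II) (p : Fin (n + 1) → II) (m : ℕ)
    (x : II) (v : ℕ → Fin n) : Prop :=
  f^[m] x = x ∧ (∀ i : ℕ, 0 < i → i < m → f^[i] x ≠ x) ∧
    ∀ i : ℕ, p (v i).castSucc ≤ f^[i] x ∧ f^[i] x ≤ p (v i).succ

/-- The sign (`true` = `+`) of the initial segment of length `k` of a signed path. -/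
def signAt (s : ℕ → Bool) (k : ℕ) : Bool :=
  decide (Even ((Finset.range k).filter (fun i => s i = false)).card)

/-- Lexicographic ordering of (infinite liftings of) signed paths, comparing the vertex
sequences `v` and `w`; at the first difference the comparison is reversed iff the sign
of the common initial segment is negative. -/
def seqLT {n : ℕ} (v : ℕ → Fin n) (s : ℕ → Bool) (w : ℕ → Fin n) : Prop :=
  ∃ k : ℕ, (∀ i < k, v i = w i) ∧ v k ≠ w k ∧ (v k < w k ↔ signAt s k = true)

/-- The shift of a sequence by `i`. -/
def shiftSeq {α : Type} (v : ℕ → α) (i : ℕ) : ℕ → α := fun j => v (i + j)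

/-- A loop of length `m` (given by `m`-periodic sequences) is simple if it is not the
repetition of a shorter loop. -/
def SimpleLoop {α β : Type} (m : ℕ) (v : ℕ → α) (s : ℕ → β) : Prop :=
  ¬ ∃ d : ℕ, 0 < d ∧ d < m ∧ d ∣ m ∧ (∀ i, v (i + d) = v i) ∧ (∀ i, s (i + d) = s i)

/-- The basic bands associated to a (spatially labelled) periodic orbit of strips
`B 0 < B 1 < … < B n`: `I_{B_k B_{k+1}} = E_{(B_k)⁺ (B_{k+1})⁻}`. -/
def basicBand {n : ℕ} (B : Fin (n + 1) → Set Cyl) (k : Fin n) : Set Cyl :=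
  bandBetween (topCover (B k.castSucc)) (botCover (B k.succ))

/-- Signed arrow between bands in a signed Markov graph of `F`. -/
def BArrow (F : Cyl → Cyl) (s : Bool) (A B : Set Cyl) : Prop :=
  if s then FCoversPos F A B else FCoversNeg F A B

/-- A loop of length `m` in the signed Markov graph of `F` over the basic bands of the
periodic orbit of strips `B`. -/
def IsBLoop (F : Cyl → Cyl) {n : ℕ} (B : Fin (n + 1) → Set Cyl) (m : ℕ)
    (v : ℕ → Fin n) (s : ℕ → Bool) : Prop :=
  0 < m ∧ (∀ i, v (i + m) = v i) ∧ (∀ i, s (i + m) = s i) ∧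
    ∀ i, BArrow F (s i) (basicBand B (v i)) (basicBand B (v (i + 1)))

/-- Equality of patterns given as cyclic permutations of possibly different index sets. -/
def PatternEqNat {a b : ℕ} (τ : Equiv.Perm (Fin a)) (ν : Equiv.Perm (Fin b)) : Prop :=
  a = b ∧ ∀ (i : Fin a) (j : Fin b), (i : ℕ) = (j : ℕ) → ((τ i : ℕ) = (ν j : ℕ))

/-- The entropy of a strips pattern: the infimum of the entropies of the maps in `S(Ω)`
exhibiting it. -/
def patternEntropy {n : ℕ} (τ : Equiv.Perm (Fin n)) : EReal :=
  sInf {e : EReal | ∃ F : Cyl → Cyl, IsQPF F ∧ ExhibitsStripPattern F τ ∧ e = hTop F}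

end


noncomputable def hit (g : ℝ → ℝ) (a b y : ℝ) : ℝ := sInf {x | x ∈ Icc a b ∧ y ≤ g x}

lemma hit_mem {g : ℝ → ℝ} (hg : Continuous g) {a b y : ℝ} (hab : a ≤ b) (hy : y ≤ g b) :
    hit g a b y ∈ Icc a b ∧ y ≤ g (hit g a b y) := by
  have hc : IsClosed {x | x ∈ Icc a b ∧ y ≤ g x} :=
    isClosed_Icc.inter (isClosed_le continuous_const hg)
  exact hc.csInf_mem ⟨b, ⟨hab, le_rfl⟩, hy⟩ ⟨a, fun x hx => hx.1.1⟩

lemma hit_le {g : ℝ → ℝ} {a b y x : ℝ} (hx : x ∈ Icc a b) (h : y ≤ g x) : hit g a b y ≤ x :=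
  csInf_le ⟨a, fun x hx => hx.1.1⟩ ⟨hx, h⟩

lemma hit_eq {g : ℝ → ℝ} (hg : Continuous g) {a b y : ℝ} (hab : a ≤ b) (hy : y ≤ g b)
    (ha : g a ≤ y) : g (hit g a b y) = y := by
  obtain ⟨h1, h2⟩ := hit_mem hg hab hy
  obtain ⟨x, hx, hxy⟩ := intermediate_value_Icc h1.1 hg.continuousOn ⟨ha, h2⟩
  have := hit_le (g := g) (a := a) (b := b) (y := y) ⟨hx.1, hx.2.trans h1.2⟩ hxy.ge
  rwa [le_antisymm hx.2 this] at hxy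

lemma hit_below {g : ℝ → ℝ} (hg : Continuous g) {a b y : ℝ} (hab : a ≤ b) (hy : y ≤ g b)
    (ha : g a ≤ y) : ∀ x ∈ Icc a (hit g a b y), g x ≤ y := by
  intro x hx
  obtain ⟨h1, h2⟩ := hit_mem hg hab hy
  by_contra h
  push Not at h
  have := hit_le (g := g) (a := a) (b := b) (y := y) ⟨hx.1, hx.2.trans h1.2⟩ h.le
  have h3 := le_antisymm hx.2 this
  rw [h3, hit_eq hg hab hy ha] at h
  exact lt_irrefl _ h

lemma hit_mono {g : ℝ → ℝ} (hg : Continuous g) {a b y y' : ℝ} (hab : a ≤ b) (hy : y' ≤ g b)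
    (h : y ≤ y') : hit g a b y ≤ hit g a b y' := by
  obtain ⟨h1, h2⟩ := hit_mem hg hab hy
  exact hit_le h1 (h.trans h2)

noncomputable def lst (g : ℝ → ℝ) (a b y : ℝ) : ℝ := - hit (fun x => - g (-x)) (-b) (-a) (-y)

lemma lst_mem {g : ℝ → ℝ} (hg : Continuous g) {a b y : ℝ} (hab : a ≤ b) (hy : g a ≤ y) :
    lst g a b y ∈ Icc a b := by
  have := (hit_mem (g := fun x => - g (-x)) (by fun_prop) (neg_le_neg hab) (y := -y) (by simpa)).1
  unfold lst
  constructor <;> [linarith [this.2]; linarith [this.1]]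

lemma lst_eq {g : ℝ → ℝ} (hg : Continuous g) {a b y : ℝ} (hab : a ≤ b) (hy : g a ≤ y)
    (hb : y ≤ g b) : g (lst g a b y) = y := by
  have := (hit_eq (g := fun x => - g (-x)) (by fun_prop) (neg_le_neg hab) (y := -y) (by simpa) (by simpa))
  unfold lst
  linarith

lemma lst_above {g : ℝ → ℝ} (hg : Continuous g) {a b y : ℝ} (hab : a ≤ b) (hy : g a ≤ y)
    (hb : y ≤ g b) : ∀ x ∈ Icc (lst g a b y) b, y ≤ g x := by
  intro x hx
  have := (hit_below (g := fun x => - g (-x)) (by fun_prop) (neg_le_neg hab) (y := -y) (by simpa) (by simpa)) (-x)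
    ⟨by linarith [hx.2], by have := hx.1; unfold lst at this; linarith⟩
  simp at this
  linarith

/-- exact refinement -/
lemma exact_ref {g : ℝ → ℝ} (hg : Continuous g) {a b c d : ℝ} (hab : a ≤ b) (hcd : c ≤ d)
    (hc : g a ≤ c) (hd : d ≤ g b) :
    a ≤ lst g a (hit g a b d) c ∧ lst g a (hit g a b d) c ≤ hit g a b d ∧ hit g a b d ≤ b ∧
    g (lst g a (hit g a b d) c) = c ∧ g (hit g a b d) = d ∧
    ∀ x ∈ Icc (lst g a (hit g a b d) c) (hit g a b d), g x ∈ Icc c d := by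
  obtain ⟨h1, h2⟩ := hit_mem hg hab hd
  have h3 := hit_eq hg hab hd (hc.trans hcd)
  have h4 := lst_mem hg h1.1 hc
  refine ⟨h4.1, h4.2, h1.2, lst_eq hg h1.1 hc (by rw [h3]; exact hcd), h3, fun x hx => ⟨?_, ?_⟩⟩
  · exact lst_above hg h1.1 hc (by rw [h3]; exact hcd) x hx
  · exact hit_below hg hab hd (hc.trans hcd) x ⟨h4.1.trans hx.1, hx.2⟩

lemma measurable_hit {X : Type*} [TopologicalSpace X] [MeasurableSpace X] [BorelSpace X]
    [SecondCountableTopology X] {g : X → ℝ → ℝ} (hg : Continuous (Function.uncurry g))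
    {a b y : X → ℝ} (ha : Measurable a) (hb : Measurable b) (hy : Measurable y)
    (hab : ∀ θ, a θ ≤ b θ) (hyb : ∀ θ, y θ ≤ g θ (b θ)) :
    Measurable fun θ => hit (g θ) (a θ) (b θ) (y θ) := by
  have hgθ : ∀ θ, Continuous (g θ) := fun θ => hg.comp (by fun_prop : Continuous fun x => (θ, x))
  let Φ : X × ℝ × ℝ → ℝ := fun z => sSup ((fun s : ℝ => g z.1 (z.2.1 + s * (z.2.2 - z.2.1))) '' Icc 0 1)
  have hΦ : Continuous Φ := by
    apply IsCompact.continuous_sSup isCompact_Icc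
    have : Continuous fun z : (X × ℝ × ℝ) × ℝ => (z.1.1, z.1.2.1 + z.2 * (z.1.2.2 - z.1.2.1)) := by
      fun_prop
    exact hg.comp this
  refine measurable_of_Iic fun r => ?_
  have : (fun θ => hit (g θ) (a θ) (b θ) (y θ)) ⁻¹' Iic r =
      {θ | a θ ≤ r} ∩ {θ | y θ ≤ Φ (θ, a θ, min (b θ) r)} := by
    ext θ
    simp only [mem_preimage, mem_Iic, mem_inter_iff, mem_ofPred_eq]
    obtain ⟨h1, h2⟩ := hit_mem (hgθ θ) (hab θ) (hyb θ)
    have hcomp : ∀ l u : ℝ, IsCompact ((fun s : ℝ => g θ (l + s * (u - l))) '' Icc 0 1) := fun l u =>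
      isCompact_Icc.image ((hgθ θ).comp (by fun_prop))
    constructor
    · intro h
      refine ⟨h1.1.trans h, h2.trans ?_⟩
      apply le_csSup (hcomp _ _).bddAbove
      set t := hit (g θ) (a θ) (b θ) (y θ)
      have ht : t ≤ min (b θ) r := le_min h1.2 h
      rcases eq_or_lt_of_le h1.1 with h0 | h0
      · exact ⟨0, by simp, by simp [← h0]⟩
      · have hpos : 0 < min (b θ) r - a θ := by linarith
        refine ⟨(t - a θ) / (min (b θ) r - a θ), ⟨div_nonneg (by linarith) hpos.le, ?_⟩, ?_⟩
        · rw [div_le_one hpos]; linarith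
        · simp only
          rw [div_mul_cancel₀ _ hpos.ne']; congr 1; ring
    · rintro ⟨h3, h4⟩
      obtain ⟨s, hs, hs'⟩ := (hcomp (a θ) (min (b θ) r)).sSup_mem ⟨_, 0, by simp, rfl⟩
      have h5 : a θ ≤ min (b θ) r := le_min (hab θ) h3
      simp only [Φ] at h4
      rw [← hs'] at h4
      have h6 : a θ + s * (min (b θ) r - a θ) ≤ min (b θ) r := by nlinarith [hs.1, hs.2]
      have h7 : a θ ≤ a θ + s * (min (b θ) r - a θ) := by nlinarith [hs.1, hs.2]
      exact (hit_le ⟨h7, h6.trans (min_le_left _ _)⟩ h4).trans (h6.trans (min_le_right _ _))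
  rw [this]
  apply MeasurableSet.inter (measurableSet_le ha measurable_const)
  apply measurableSet_le hy
  exact hΦ.measurable.comp (measurable_id.prodMk (ha.prodMk (hb.min measurable_const)))

lemma measurable_lst {X : Type*} [TopologicalSpace X] [MeasurableSpace X] [BorelSpace X]
    [SecondCountableTopology X] {g : X → ℝ → ℝ} (hg : Continuous (Function.uncurry g))
    {a b y : X → ℝ} (ha : Measurable a) (hb : Measurable b) (hy : Measurable y)
    (hab : ∀ θ, a θ ≤ b θ) (hyb : ∀ θ, g θ (a θ) ≤ y θ) :
    Measurable fun θ => lst (g θ) (a θ) (b θ) (y θ) := by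
  refine (measurable_hit (g := fun θ x => - g θ (-x)) ?_ hb.neg ha.neg hy.neg
    (fun θ => neg_le_neg (hab θ)) (fun θ => by simpa using hyb θ)).neg
  exact (hg.comp (by fun_prop : Continuous fun z : X × ℝ => (z.1, -z.2))).neg


noncomputable def slo (s : Bool) (p : ℝ × ℝ) : ℝ := if s then p.1 else -p.2
noncomputable def shi (s : Bool) (p : ℝ × ℝ) : ℝ := if s then p.2 else -p.1
noncomputable def sgn (s : Bool) (g : ℝ → ℝ) (x : ℝ) : ℝ := if s then g x else -g x

lemma sgn_cont (s : Bool) {g : ℝ → ℝ} (hg : Continuous g) : Continuous (sgn s g) := by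
  cases s
  · have : sgn false g = fun x => - g x := by funext x; simp [sgn]
    rw [this]; fun_prop
  · have : sgn true g = g := by funext x; simp [sgn]
    rwa [this]

lemma slo_le_shi (s : Bool) {p : ℝ × ℝ} (h : p.1 ≤ p.2) : slo s p ≤ shi s p := by
  cases s <;> simp [slo, shi, h]

lemma slo_mono (s : Bool) {p p' : ℝ × ℝ} (h : p.1 ≤ p'.1) (h' : p'.2 ≤ p.2) : slo s p ≤ slo s p' := by
  cases s <;> simp [slo, h, h']

lemma shi_mono (s : Bool) {p p' : ℝ × ℝ} (h : p.1 ≤ p'.1) (h' : p'.2 ≤ p.2) : shi s p' ≤ shi s p := by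
  cases s <;> simp [shi, h, h']

lemma sgn_image (s : Bool) (g : ℝ → ℝ) (A : Set ℝ) (p : ℝ × ℝ)
    (h : sgn s g '' A = Icc (slo s p) (shi s p)) : g '' A = Icc p.1 p.2 := by
  cases s
  · have h1 : g '' A = (fun x => -x) '' (sgn false g '' A) := by
      rw [image_image]; simp [sgn]
    rw [h1, h]; simp [slo, shi]
  · have : sgn true g = g := by funext x; simp [sgn]
    rw [this] at h
    simpa [slo, shi] using h

section
variable {X : Type*} [TopologicalSpace X] [MeasurableSpace X] [BorelSpace X]
    [SecondCountableTopology X]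

lemma sgn_ucont (s : Bool) {g : X → ℝ → ℝ} (hg : Continuous (Function.uncurry g)) :
    Continuous (Function.uncurry fun θ => sgn s (g θ)) := by
  cases s
  · have : (Function.uncurry fun θ => sgn false (g θ)) = fun z => - Function.uncurry g z := by
      ext z; simp [sgn, Function.uncurry]
    rw [this]; exact hg.neg
  · have : (Function.uncurry fun θ => sgn true (g θ)) = fun z => Function.uncurry g z := by
      ext z; simp [sgn, Function.uncurry]
    rw [this]; exact hg

lemma slo_meas (s : Bool) : Measurable (slo s) := by
  cases s <;> unfold slo <;> simp <;> fun_prop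
lemma shi_meas (s : Bool) : Measurable (shi s) := by
  cases s <;> unfold shi <;> simp <;> fun_prop
lemma slo_cont (s : Bool) : Continuous (slo s) := by
  cases s <;> unfold slo <;> simp <;> fun_prop
lemma shi_cont (s : Bool) : Continuous (shi s) := by
  cases s <;> unfold shi <;> simp <;> fun_prop

/-- cover data -/
structure Cov (R : X → X) (g : X → ℝ → ℝ) (s : ℕ → Bool) (Z : ℕ → X → ℝ × ℝ) : Prop where
  meas : ∀ i, Measurable (Z i)
  le : ∀ i θ, (Z i θ).1 ≤ (Z i θ).2
  l : ∀ i θ, sgn (s i) (g θ) (Z i θ).1 ≤ slo (s i) (Z (i+1) (R θ))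
  r : ∀ i θ, shi (s i) (Z (i+1) (R θ)) ≤ sgn (s i) (g θ) (Z i θ).2

noncomputable def refineZ (R : X → X) (g : X → ℝ → ℝ) (s : ℕ → Bool) (Z : ℕ → X → ℝ × ℝ) :
    ℕ → X → ℝ × ℝ := fun i θ =>
  (lst (sgn (s i) (g θ)) (Z i θ).1
    (hit (sgn (s i) (g θ)) (Z i θ).1 (Z i θ).2 (shi (s i) (Z (i+1) (R θ)))) (slo (s i) (Z (i+1) (R θ))),
   hit (sgn (s i) (g θ)) (Z i θ).1 (Z i θ).2 (shi (s i) (Z (i+1) (R θ))))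

lemma refineZ_spec {R : X → X} {g : X → ℝ → ℝ} (hg : Continuous (Function.uncurry g))
   {s : ℕ → Bool} {Z : ℕ → X → ℝ × ℝ}
    (h : Cov R g s Z) (i : ℕ) (θ : X) :
    (Z i θ).1 ≤ (refineZ R g s Z i θ).1 ∧ (refineZ R g s Z i θ).1 ≤ (refineZ R g s Z i θ).2 ∧
    (refineZ R g s Z i θ).2 ≤ (Z i θ).2 ∧
    sgn (s i) (g θ) (refineZ R g s Z i θ).1 = slo (s i) (Z (i+1) (R θ)) ∧
    sgn (s i) (g θ) (refineZ R g s Z i θ).2 = shi (s i) (Z (i+1) (R θ)) ∧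
    ∀ x ∈ Icc (refineZ R g s Z i θ).1 (refineZ R g s Z i θ).2, sgn (s i) (g θ) x ∈
      Icc (slo (s i) (Z (i+1) (R θ))) (shi (s i) (Z (i+1) (R θ))) := by
  have hgθ : Continuous (g θ) := hg.comp (by fun_prop : Continuous fun x => (θ, x))
  exact exact_ref (sgn_cont (s i) hgθ) (h.le i θ) (slo_le_shi _ (h.le _ _)) (h.l i θ) (h.r i θ)

lemma refineZ_cov {R : X → X} (hR : Measurable R) {g : X → ℝ → ℝ} (hg : Continuous (Function.uncurry g))
   {s : ℕ → Bool} {Z : ℕ → X → ℝ × ℝ}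
    (h : Cov R g s Z) : Cov R g s (refineZ R g s Z) := by
  have hs := refineZ_spec hg h
  have hlo : ∀ i, Measurable fun θ => slo (s i) (Z (i+1) (R θ)) := fun i =>
    (slo_meas _).comp ((h.meas _).comp hR)
  have hhi : ∀ i, Measurable fun θ => shi (s i) (Z (i+1) (R θ)) := fun i =>
    (shi_meas _).comp ((h.meas _).comp hR)
  have hgθ : ∀ θ, Continuous (g θ) := fun θ => hg.comp (by fun_prop : Continuous fun x => (θ, x))
  have hmem := fun i θ => hit_mem (sgn_cont (s i) (hgθ θ)) (h.le i θ) (h.r i θ)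
  refine ⟨fun i => ?_, fun i θ => (hs i θ).2.1, fun i θ => ?_, fun i θ => ?_⟩
  · have h1 : Measurable fun θ => 
      hit (sgn (s i) (g θ)) (Z i θ).1 (Z i θ).2 (shi (s i) (Z (i+1) (R θ))) :=
      measurable_hit (sgn_ucont (s i) hg) (h.meas i).fst (h.meas i).snd (hhi i) (h.le i) (h.r i)
    refine Measurable.prodMk ?_ h1
    exact measurable_lst (sgn_ucont (s i) hg) (h.meas i).fst h1 (hlo i) 
      (fun θ => (hmem i θ).1.1) (h.l i)
  · rw [(hs i θ).2.2.2.1]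
    exact slo_mono _ (hs _ _).1 (hs _ _).2.2.1
  · rw [(hs i θ).2.2.2.2.1]
    exact shi_mono _ (hs _ _).1 (hs _ _).2.2.1

theorem phase2 {R : X → X} (hR : Measurable R) {g : X → ℝ → ℝ} (hg : Continuous (Function.uncurry g))
   {s : ℕ → Bool} {Z : ℕ → X → ℝ × ℝ} (h : Cov R g s Z) (q : ℕ) (hs : ∀ i, s (i+q) = s i)
   (hZ : ∀ i, Z (i+q) = Z i) :
   ∃ α β : ℕ → X → ℝ, (∀ i, Measurable (α i)) ∧ (∀ i, Measurable (β i)) ∧ (∀ i, α (i+q) = α i) ∧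
    (∀ i, β (i+q) = β i) ∧ (∀ i θ, (Z i θ).1 ≤ α i θ ∧ α i θ ≤ β i θ ∧ β i θ ≤ (Z i θ).2) ∧
    ∀ i θ, g θ '' Icc (α i θ) (β i θ) = Icc (α (i+1) (R θ)) (β (i+1) (R θ)) := by
  let W : ℕ → ℕ → X → ℝ × ℝ := fun n => (refineZ R g s)^[n] Z
  have hW1 : ∀ n, W (n+1) = refineZ R g s (W n) := fun n => Function.iterate_succ_apply' _ _ _
  have hcov : ∀ n, Cov R g s (W n) := by
    intro n
    induction n with
    | zero => exact h
    | succ n ih => rw [hW1]; exact refineZ_cov hR hg ih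
  have hper : ∀ n i, W n (i+q) = W n i := by
    intro n
    induction n with
    | zero => exact hZ
    | succ n ih =>
      intro i; rw [hW1]; funext θ; simp only [refineZ]
      rw [show i + q + 1 = i + 1 + q by ring, ih, ih, hs]
  have hspec : ∀ n i θ, _ := fun n => refineZ_spec hg (hcov n)
  simp only [← hW1] at hspec
  have hgθ : ∀ θ, Continuous (g θ) := fun θ => hg.comp (by fun_prop : Continuous fun x => (θ, x))
  have hm1 : ∀ i θ, Monotone fun n => (W n i θ).1 := fun i θ =>
    monotone_nat_of_le_succ fun n => (hspec n i θ).1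
  have hm2 : ∀ i θ, Antitone fun n => (W n i θ).2 := fun i θ =>
    antitone_nat_of_succ_le fun n => (hspec n i θ).2.2.1
  have hcross : ∀ i θ m n, (W m i θ).1 ≤ (W n i θ).2 := fun i θ m n =>
    (hm1 i θ (le_max_left m n)).trans (((hcov (max m n)).le i θ).trans (hm2 i θ (le_max_right m n)))
  have ht1 : ∀ i θ, Filter.Tendsto (fun n => (W n i θ).1) Filter.atTop (nhds (⨆ n, (W n i θ).1)) :=
    fun i θ => tendsto_atTop_ciSup (hm1 i θ) ⟨(W 0 i θ).2, by rintro _ ⟨n, rfl⟩; exact hcross i θ n 0⟩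
  have ht2 : ∀ i θ, Filter.Tendsto (fun n => (W n i θ).2) Filter.atTop (nhds (⨅ n, (W n i θ).2)) :=
    fun i θ => tendsto_atTop_ciInf (hm2 i θ) ⟨(W 0 i θ).1, by rintro _ ⟨n, rfl⟩; exact hcross i θ 0 n⟩
  have hle1 : ∀ i θ n, (W n i θ).1 ≤ ⨆ n, (W n i θ).1 := fun i θ n =>
    le_ciSup (f := fun n => (W n i θ).1) ⟨(W 0 i θ).2, by rintro _ ⟨n, rfl⟩; exact hcross i θ n 0⟩ n
  have hle2 : ∀ i θ n, (⨅ n, (W n i θ).2) ≤ (W n i θ).2 := fun i θ n =>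
    ciInf_le (f := fun n => (W n i θ).2) ⟨(W 0 i θ).1, by rintro _ ⟨n, rfl⟩; exact hcross i θ 0 n⟩ n
  refine ⟨fun i θ => ⨆ n, (W n i θ).1, fun i θ => ⨅ n, (W n i θ).2, fun i => ?_, fun i => ?_,
    fun i => ?_, fun i => ?_, fun i θ => ⟨hle1 i θ 0, ?_, hle2 i θ 0⟩, fun i θ => ?_⟩
  · exact measurable_of_tendsto_metrizable (fun n => ((hcov n).meas i).fst)
      (tendsto_pi_nhds.2 fun θ => ht1 i θ)
  · exact measurable_of_tendsto_metrizable (fun n => ((hcov n).meas i).snd)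
      (tendsto_pi_nhds.2 fun θ => ht2 i θ)
  · simp only [hper]
  · simp only [hper]
  · exact le_of_tendsto_of_tendsto' (ht1 i θ) (ht2 i θ) fun n => hcross i θ n n
  · set a := ⨆ n, (W n i θ).1 with ha
    set b := ⨅ n, (W n i θ).2 with hb
    have htp := (ht1 (i+1) (R θ)).prodMk_nhds (ht2 (i+1) (R θ))
    simp only [Prod.mk.eta] at htp
    set P : ℝ × ℝ := (⨆ n, (W n (i+1) (R θ)).1, ⨅ n, (W n (i+1) (R θ)).2) with hP
    have hlo := ((slo_cont (s i)).tendsto P).comp htp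
    have hhi := ((shi_cont (s i)).tendsto P).comp htp
    have hgc := sgn_cont (s i) (hgθ θ)
    have ea : sgn (s i) (g θ) a = slo (s i) P := by
      refine tendsto_nhds_unique (((hgc.tendsto a).comp (ht1 i θ)).comp (Filter.tendsto_add_atTop_nat 1)) (hlo.congr fun n => ?_)
      exact (hspec n i θ).2.2.2.1.symm
    have eb : sgn (s i) (g θ) b = shi (s i) P := by
      refine tendsto_nhds_unique (((hgc.tendsto b).comp (ht2 i θ)).comp (Filter.tendsto_add_atTop_nat 1)) (hhi.congr fun n => ?_)
      exact (hspec n i θ).2.2.2.2.1.symm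
    have hab : a ≤ b := le_of_tendsto_of_tendsto' (ht1 i θ) (ht2 i θ) fun n => hcross i θ n n
    refine sgn_image (s i) (g θ) _ P ?_
    apply Subset.antisymm
    · rintro _ ⟨x, hx, rfl⟩
      have hx' : ∀ n, sgn (s i) (g θ) x ∈ _ := fun n => (hspec n i θ).2.2.2.2.2 x
        ⟨(hle1 i θ (n+1)).trans hx.1, hx.2.trans (hle2 i θ (n+1))⟩
      exact ⟨le_of_tendsto' hlo fun n => (hx' n).1, ge_of_tendsto' hhi fun n => (hx' n).2⟩
    · rw [← ea, ← eb]
      exact intermediate_value_Icc hab hgc.continuousOn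

noncomputable def stepY (R : X → X) (g : X → ℝ → ℝ) (s : ℕ → Bool) (J : ℕ → X → ℝ × ℝ)
    (Y : ℕ → X → ℝ × ℝ) : ℕ → X → ℝ × ℝ := fun i θ =>
  (hit (sgn (s i) (g θ)) (J i θ).1 (J i θ).2 (slo (s i) (Y (i+1) (R θ))),
   hit (sgn (s i) (g θ)) (J i θ).1 (J i θ).2 (shi (s i) (Y (i+1) (R θ))))

theorem loop_thm {R : X → X} (hR : Measurable R) {g : X → ℝ → ℝ} (hg : Continuous (Function.uncurry g))
    {s : ℕ → Bool} {J : ℕ → X → ℝ × ℝ} {u : ℕ → ℕ} (q : ℕ) (hq : 0 < q) (hu : ∀ i, u (i+q) = u i)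
    (hJ : Cov R g (fun i => s (u i)) (fun i => J (u i)))
    (hord : ∀ i j, u i < u j → ∀ θ, (J (u i) θ).2 ≤ (J (u j) θ).1) :
    ∃ α β : ℕ → X → ℝ, (∀ i, Measurable (α i)) ∧ (∀ i, Measurable (β i)) ∧ (∀ i, α (i+q) = α i) ∧
    (∀ i, β (i+q) = β i) ∧
    (∀ i θ, (J (u i) θ).1 ≤ α i θ ∧ α i θ ≤ β i θ ∧ β i θ ≤ (J (u i) θ).2) ∧
    (∀ i θ, g θ '' Icc (α i θ) (β i θ) = Icc (α (i+1) (R θ)) (β (i+1) (R θ))) ∧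
    ∀ i j, (∃ t, u (i+t) ≠ u (j+t)) → (∀ θ, β i θ ≤ α j θ) ∨ (∀ θ, β j θ ≤ α i θ) := by
  have hgθ : ∀ θ, Continuous (g θ) := fun θ => hg.comp (by fun_prop : Continuous fun x => (θ, x))
  let Y : ℕ → ℕ → X → ℝ × ℝ := fun n => 
    (stepY R g (fun i => s (u i)) (fun i => J (u i)))^[n] (fun i => J (u i))
  have hY0 : ∀ i, Y 0 i = J (u i) := fun i => rfl
  have hY1 : ∀ n, Y (n+1) = stepY R g (fun i => s (u i)) (fun i => J (u i)) (Y n) := 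
    fun n => Function.iterate_succ_apply' _ _ _
  have hin : ∀ n i θ, (J (u i) θ).1 ≤ (Y n i θ).1 ∧ (Y n i θ).1 ≤ (Y n i θ).2 ∧
      (Y n i θ).2 ≤ (J (u i) θ).2 := by
    intro n
    induction n with
    | zero => intro i θ; exact ⟨le_rfl, hJ.le i θ, le_rfl⟩
    | succ n ih =>
      intro i θ
      rw [hY1]
      have h1 := ih (i+1) (R θ)
      have h3 : shi (s (u i)) (Y n (i+1) (R θ)) ≤ sgn (s (u i)) (g θ) (J (u i) θ).2 :=
        (shi_mono _ h1.1 h1.2.2).trans (hJ.r i θ)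
      have h4 := slo_le_shi (s (u i)) h1.2.1
      have hc := sgn_cont (s (u i)) (hgθ θ)
      exact ⟨(hit_mem hc (hJ.le i θ) (h4.trans h3)).1.1, hit_mono hc (hJ.le i θ) h3 h4,
        (hit_mem hc (hJ.le i θ) h3).1.2⟩
  have hhi : ∀ n i θ, shi (s (u i)) (Y n (i+1) (R θ)) ≤ sgn (s (u i)) (g θ) (J (u i) θ).2 :=
    fun n i θ => (shi_mono _ (hin n (i+1) (R θ)).1 (hin n (i+1) (R θ)).2.2).trans (hJ.r i θ)
  have hlh : ∀ n i θ, slo (s (u i)) (Y n (i+1) (R θ)) ≤ shi (s (u i)) (Y n (i+1) (R θ)) :=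
    fun n i θ => slo_le_shi _ (hin n (i+1) (R θ)).2.1
  have hlo : ∀ n i θ, sgn (s (u i)) (g θ) (J (u i) θ).1 ≤ slo (s (u i)) (Y n (i+1) (R θ)) :=
    fun n i θ => (hJ.l i θ).trans (slo_mono _ (hin n (i+1) (R θ)).1 (hin n (i+1) (R θ)).2.2)
  have hmeas : ∀ n i, Measurable (Y n i) := by
    intro n
    induction n with
    | zero => exact hJ.meas
    | succ n ih =>
      intro i
      rw [hY1]
      refine Measurable.prodMk ?_ ?_
      · exact measurable_hit (sgn_ucont (s (u i)) hg) (hJ.meas i).fst (hJ.meas i).snd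
          ((slo_meas _).comp ((ih (i+1)).comp hR)) (hJ.le i) 
          (fun θ => (hlh n i θ).trans (hhi n i θ))
      · exact measurable_hit (sgn_ucont (s (u i)) hg) (hJ.meas i).fst (hJ.meas i).snd
          ((shi_meas _).comp ((ih (i+1)).comp hR)) (hJ.le i) (hhi n i)
  have hnest : ∀ n i θ, (Y n i θ).1 ≤ (Y (n+1) i θ).1 ∧ (Y (n+1) i θ).2 ≤ (Y n i θ).2 := by
    intro n
    induction n with
    | zero => intro i θ; exact ⟨(hin 1 i θ).1, (hin 1 i θ).2.2⟩
    | succ n ih =>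
      intro i θ
      have hc := sgn_cont (s (u i)) (hgθ θ)
      have h1 := ih (i+1) (R θ)
      have h2 := slo_mono (s (u i)) h1.1 h1.2
      have h3 := shi_mono (s (u i)) h1.1 h1.2
      rw [hY1 (n+1), hY1 n]
      rw [hY1 n] at h2 h3
      have h5 := hhi (n+1) i θ
      have h6 := hlh (n+1) i θ
      rw [hY1 n] at h5 h6
      exact ⟨hit_mono hc (hJ.le i θ) (h6.trans h5) h2, 
        hit_mono hc (hJ.le i θ) (hhi n i θ) h3⟩
  have hcov : ∀ n, Cov R g (fun i => s (u i)) (Y (n+1)) := by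
    intro n
    refine ⟨hmeas _, fun i θ => (hin _ i θ).2.1, fun i θ => ?_, fun i θ => ?_⟩
    · have hc := sgn_cont (s (u i)) (hgθ θ)
      have e : sgn (s (u i)) (g θ) (Y (n+1) i θ).1 = slo (s (u i)) (Y n (i+1) (R θ)) := by
        rw [hY1]
        exact hit_eq hc (hJ.le i θ) ((hlh n i θ).trans (hhi n i θ)) (hlo n i θ)
      rw [e]
      exact slo_mono _ (hnest n (i+1) (R θ)).1 (hnest n (i+1) (R θ)).2
    · have hc := sgn_cont (s (u i)) (hgθ θ)
      have e : sgn (s (u i)) (g θ) (Y (n+1) i θ).2 = shi (s (u i)) (Y n (i+1) (R θ)) := by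
        rw [hY1]
        exact hit_eq hc (hJ.le i θ) (hhi n i θ) ((hlo n i θ).trans (hlh n i θ))
      rw [e]
      exact shi_mono _ (hnest n (i+1) (R θ)).1 (hnest n (i+1) (R θ)).2
  have hper : ∀ n i, Y n (i+q) = Y n i := by
    intro n
    induction n with
    | zero => intro i; rw [hY0, hY0, hu]
    | succ n ih =>
      intro i; rw [hY1]; funext θ; simp only [stepY]
      rw [show i + q + 1 = i + 1 + q by ring, ih, hu]
  have hsep : ∀ n i j, (∃ t ≤ n, u (i+t) ≠ u (j+t)) → 
      (∀ θ, (Y n i θ).2 ≤ (Y n j θ).1) ∨ (∀ θ, (Y n j θ).2 ≤ (Y n i θ).1) := by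
    have base : ∀ n i j, u i ≠ u j → 
      (∀ θ, (Y n i θ).2 ≤ (Y n j θ).1) ∨ (∀ θ, (Y n j θ).2 ≤ (Y n i θ).1) := by
      intro n i j h
      rcases lt_or_gt_of_ne h with h | h
      · exact Or.inl fun θ => (hin n i θ).2.2.trans ((hord i j h θ).trans (hin n j θ).1)
      · exact Or.inr fun θ => (hin n j θ).2.2.trans ((hord j i h θ).trans (hin n i θ).1)
    intro n
    induction n with
    | zero =>
      rintro i j ⟨t, ht, h⟩
      obtain rfl : t = 0 := by omega
      exact base 0 i j h
    | succ n ih =>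
      rintro i j ⟨t, ht, h⟩
      by_cases h0 : u i = u j
      · rcases t with _ | t
        · exact absurd h0 h
        have key : ∀ i j, u i = u j → (∀ θ, (Y n (i+1) θ).2 ≤ (Y n (j+1) θ).1) → 
            (∀ θ, (Y (n+1) i θ).2 ≤ (Y (n+1) j θ).1) ∨ (∀ θ, (Y (n+1) j θ).2 ≤ (Y (n+1) i θ).1) := by
          intro i j h0 h
          rcases hs : s (u i) with _ | _
          · refine Or.inr fun θ => ?_
            rw [hY1]
            simp only [stepY]
            rw [← h0]
            refine hit_mono (sgn_cont (s (u i)) (hgθ θ)) (hJ.le i θ) 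
              ((hlh n i θ).trans (hhi n i θ)) ?_
            simpa [hs, shi, slo] using h (R θ)
          · refine Or.inl fun θ => ?_
            rw [hY1]
            simp only [stepY]
            rw [h0]
            refine hit_mono (sgn_cont (s (u j)) (hgθ θ)) (hJ.le j θ) 
              ((hlh n j θ).trans (hhi n j θ)) ?_
            simpa [h0 ▸ hs, shi, slo] using h (R θ)
        rcases ih (i+1) (j+1) ⟨t, by omega, by 
          rwa [show i + 1 + t = i + (t+1) by ring, show j + 1 + t = j + (t+1) by ring]⟩ with h | h
        · exact key i j h0 h
        · exact (key j i h0.symm h).symm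
      · exact base _ i j h0
  obtain ⟨α, β, h1, h2, h3, h4, h5, h6⟩ := phase2 hR hg (hcov q) q (fun i => by simp only [hu]) (hper (q+1))
  refine ⟨α, β, h1, h2, h3, h4, fun i θ => ⟨(hin (q+1) i θ).1.trans (h5 i θ).1, (h5 i θ).2.1,
    (h5 i θ).2.2.trans (hin (q+1) i θ).2.2⟩, h6, ?_⟩
  rintro i j ⟨t, ht⟩
  have hup : Function.Periodic u q := hu
  have hmod : ∀ i, u (i + t % q) = u (i + t) := by
    intro i
    conv_rhs => rw [← Nat.mod_add_div t q, ← add_assoc, mul_comm]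
    exact (hup.nat_mul (t / q) (i + t % q)).symm
  rcases hsep (q+1) i j ⟨t % q, (Nat.mod_lt _ hq).le.trans (Nat.le_succ q), by rwa [hmod, hmod]⟩ with h | h
  · exact Or.inl fun θ => (h5 i θ).2.2.trans ((h θ).trans (h5 j θ).1)
  · exact Or.inr fun θ => (h5 j θ).2.2.trans ((h θ).trans (h5 i θ).1)
end

lemma resid_cont {X : Type*} [TopologicalSpace X] [MeasurableSpace X] [BorelSpace X] {φ : X → ℝ}
    (h : Measurable φ) : ∃ G ∈ residual X, ContinuousOn φ G := by
  obtain ⟨b, hbc, -, hb⟩ := TopologicalSpace.exists_countable_basis ℝ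
  have h1 : ∀ U ∈ b, ∃ V : Set X, IsOpen V ∧ φ ⁻¹' U =ᶠ[residual X] V := by
    intro U hU
    obtain ⟨V, hV, hV'⟩ := (h (hb.isOpen hU).measurableSet).residualEq_isOpen
    exact ⟨V, hV, hV'⟩
  choose! V hV hV' using h1
  refine ⟨{θ | ∀ U ∈ b, θ ∈ φ ⁻¹' U ↔ θ ∈ V U}, ?_, ?_⟩
  · have := (eventually_countable_ball hbc (l := residual X) (p := fun θ U _ => θ ∈ φ ⁻¹' U ↔ θ ∈ V U)).2 
      (fun U hU => (hV' U hU).mem_iff)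
    exact this
  · intro θ hθ
    rw [ContinuousWithinAt, hb.nhds_hasBasis.tendsto_right_iff]
    rintro U ⟨hU, hmem⟩
    have : θ ∈ V U := (hθ U hU).1 hmem
    filter_upwards [mem_nhdsWithin_of_mem_nhds ((hV U hU).mem_nhds this), self_mem_nhdsWithin] with x hx hx'
    exact (hx' U hU).2 hx


lemma exact_u {f : ℝ → ℝ} (hf : Continuous f) {a b c d : ℝ} (hc : c ∈ uIcc (f a) (f b))
    (hd : d ∈ uIcc (f a) (f b)) : ∃ a' ∈ uIcc a b, ∃ b' ∈ uIcc a b, f a' = c ∧ f b' = d ∧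
      ∀ x ∈ uIcc a' b', f x ∈ uIcc c d := by
  wlog hab : a ≤ b generalizing a b
  · have := this (a := b) (b := a) (by rwa [uIcc_comm]) (by rwa [uIcc_comm]) (by linarith)
    rwa [uIcc_comm b a] at this
  wlog hcd : c ≤ d generalizing c d
  · obtain ⟨a', ha', b', hb', h1, h2, h3⟩ := this hd hc (by linarith)
    exact ⟨b', hb', a', ha', h2, h1, by rwa [uIcc_comm b' a', uIcc_comm c d]⟩
  rw [uIcc_of_le hab, uIcc_of_le hcd]
  rcases le_total (f a) (f b) with h | h
  · rw [uIcc_of_le h] at hc hd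
    obtain ⟨h1, h2, h3, h4, h5, h6⟩ := exact_ref hf hab hcd hc.1 hd.2
    exact ⟨_, ⟨h1, h2.trans h3⟩, _, ⟨h1.trans h2, h3⟩, h4, h5, by rwa [uIcc_of_le h2]⟩
  · rw [uIcc_of_ge h] at hc hd
    obtain ⟨h1, h2, h3, h4, h5, h6⟩ := exact_ref (g := fun x => - f x) hf.neg hab (neg_le_neg hcd) 
      (neg_le_neg hd.2) (neg_le_neg hc.1)
    refine ⟨_, ⟨h1.trans h2, h3⟩, _, ⟨h1, h2.trans h3⟩, neg_injective h5, neg_injective h4, ?_⟩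
    rw [uIcc_of_ge h2]
    intro x hx
    have := h6 x hx
    exact ⟨by linarith [this.2], by linarith [this.1]⟩

lemma loop_aux {f : ℝ → ℝ} (hf : Continuous f) {A B : ℕ → ℝ} 
    (h : ∀ i, uIcc (A (i+1)) (B (i+1)) ⊆ uIcc (f (A i)) (f (B i))) (m : ℕ) : ∀ i,
    ∃ a' ∈ uIcc (A i) (B i), ∃ b' ∈ uIcc (A i) (B i), f^[m] a' = A (i+m) ∧ f^[m] b' = B (i+m) ∧
      ∀ x ∈ uIcc a' b', ∀ s ≤ m, f^[s] x ∈ uIcc (A (i+s)) (B (i+s)) := by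
  induction m with
  | zero =>
    intro i
    refine ⟨_, left_mem_uIcc, _, right_mem_uIcc, rfl, rfl, ?_⟩
    intro x hx s hs
    obtain rfl : s = 0 := by omega
    simpa using hx
  | succ m ih =>
    intro i
    obtain ⟨a, ha, b, hb, h1, h2, h3⟩ := ih (i+1)
    obtain ⟨a', ha', b', hb', h4, h5, h6⟩ := exact_u hf (h i ha) (h i hb)
    refine ⟨a', ha', b', hb', ?_, ?_, ?_⟩
    · rw [Function.iterate_succ_apply, h4, h1]; congr 1; ring
    · rw [Function.iterate_succ_apply, h5, h2]; congr 1; ring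
    · intro x hx s hs
      rcases s with _ | s
      · exact uIcc_subset_uIcc ha' hb' hx
      · rw [Function.iterate_succ_apply]
        have := h3 _ (h6 x hx) s (by omega)
        rwa [show i + (s+1) = i + 1 + s by ring]

lemma iter_mod {f : ℝ → ℝ} {n : ℕ} {x : ℝ} (hx : f^[n] x = x) (i : ℕ) : f^[i % n] x = f^[i] x := by
  conv_rhs => rw [← Nat.mod_add_div i n]
  rw [Function.iterate_add_apply, Function.iterate_mul, Function.iterate_fixed hx]

lemma per_mod {α : Type*} {A : ℕ → α} {n : ℕ} (h : ∀ i, A (i+n) = A i) (i : ℕ) : A (i % n) = A i := by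
  have hup : Function.Periodic A n := h
  exact hup.map_mod_nat i

lemma loop_lem {f : ℝ → ℝ} (hf : Continuous f) {A B : ℕ → ℝ} {n : ℕ} (hn : 0 < n)
    (hA : ∀ i, A (i+n) = A i) (hB : ∀ i, B (i+n) = B i)
    (h : ∀ i, uIcc (A (i+1)) (B (i+1)) ⊆ uIcc (f (A i)) (f (B i))) :
    ∃ x, f^[n] x = x ∧ ∀ i, f^[i] x ∈ uIcc (A i) (B i) := by
  obtain ⟨a, ha, b, hb, h1, h2, h3⟩ := loop_aux hf h n 0
  rw [zero_add] at h1 h2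
  have hA0 : A n = A 0 := by simpa using hA 0
  have hB0 : B n = B 0 := by simpa using hB 0
  rw [hA0] at h1
  rw [hB0] at h2
  have hcont : Continuous fun x => f^[n] x - x := (hf.iterate n).sub continuous_id
  have h0 : (0:ℝ) ∈ uIcc (f^[n] a - a) (f^[n] b - b) := by
    rw [h1, h2]
    rcases mem_uIcc.1 ha with ha | ha <;> rcases mem_uIcc.1 hb with hb | hb <;> rw [mem_uIcc] <;>
      first
      | left; constructor <;> linarith
      | right; constructor <;> linarith
  obtain ⟨x, hx, hx'⟩ := intermediate_value_uIcc hcont.continuousOn h0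
  have hx1 : f^[n] x = x := by simp only at hx'; linarith
  refine ⟨x, hx1, fun i => ?_⟩
  have := h3 x hx (i % n) (Nat.mod_lt _ hn).le
  rwa [iter_mod hx1, zero_add, per_mod hA, per_mod hB] at this

lemma hloop_lem {f : ℝ → ℝ} (hf : Continuous f) {a b : ℕ → ℝ} {e n : ℕ} (he : 0 < e) (hn : 0 < n)
    (hA : ∀ i, a (i+n) = a i) (hB : ∀ i, b (i+n) = b i)
    (h : ∀ i, uIcc (a (i+1)) (b (i+1)) ⊆ uIcc (f^[e] (a i)) (f^[e] (b i))) :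
    ∃ x, f^[e*n] x = x ∧ ∀ j s, s < e → f^[e*j+s] x ∈ uIcc (f^[s] (a j)) (f^[s] (b j)) := by
  obtain ⟨x, hx, hx'⟩ := loop_lem hf (A := fun i => f^[i % e] (a (i / e))) 
    (B := fun i => f^[i % e] (b (i / e))) (Nat.mul_pos he hn) 
    (fun i => by 
      simp only [Nat.add_mul_mod_self_left, Nat.add_mul_div_left _ _ he, hA])
    (fun i => by 
      simp only [Nat.add_mul_mod_self_left, Nat.add_mul_div_left _ _ he, hB])
    (by
      intro i
      by_cases hi : i % e + 1 < e
      · have h1 : (i+1) % e = i % e + 1 := by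
          rw [Nat.add_mod]
          rcases Nat.lt_or_ge 1 e with h' | h'
          · rw [Nat.mod_eq_of_lt h', Nat.mod_eq_of_lt hi]
          · omega
        have h2 : (i+1) / e = i / e := by
          rw [Nat.succ_div, if_neg]
          · rfl
          · intro h'
            have := Nat.mod_eq_zero_of_dvd h'
            omega
        rw [h1, h2, Function.iterate_succ_apply', Function.iterate_succ_apply']
      · have h0 : i % e + 1 = e := by have := Nat.mod_lt i he; omega
        have hd : e ∣ i + 1 := ⟨i / e + 1, by rw [mul_add, mul_one]; have := Nat.mod_add_div i e; omega⟩
        have h1 : (i+1) % e = 0 := Nat.mod_eq_zero_of_dvd hd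
        have h2 : (i+1) / e = i / e + 1 := by rw [Nat.succ_div, if_pos hd]
        rw [h1, h2, ← Function.iterate_succ_apply' f, ← Function.iterate_succ_apply' f, Nat.succ_eq_add_one, h0]
        exact h _)
  refine ⟨x, hx, fun j s hs => ?_⟩
  have := hx' (e*j+s)
  rwa [Nat.mul_add_mod, Nat.mod_eq_of_lt hs, Nat.mul_add_div he, Nat.div_eq_of_lt hs, add_zero] at this


/-- cyclic data -/
structure Cyc (S : Finset ℤ) (T : ℤ → ℤ) (r : ℕ) : Prop where
  maps : ∀ k ∈ S, T k ∈ S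
  reach : ∀ k ∈ S, ∀ l ∈ S, ∃ j < r, T^[j] k = l
  per : ∀ k ∈ S, ∀ j, T^[j] k = k → r ∣ j
  per' : ∀ k ∈ S, T^[r] k = k
  ne : S.Nonempty

lemma Cyc.iter {S : Finset ℤ} {T : ℤ → ℤ} {r : ℕ} (h : Cyc S T r) {k : ℤ} (hk : k ∈ S) (j : ℕ) :
    T^[j] k ∈ S := by
  induction j with
  | zero => exact hk
  | succ n ih => rw [Function.iterate_succ_apply']; exact h.maps _ ih

lemma Cyc.inv {S : Finset ℤ} {T : ℤ → ℤ} {r : ℕ} (h : Cyc S T r) (P : ℤ → Prop) {k : ℤ} (hk : k ∈ S)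
    (hP : P k) (hs : ∀ k ∈ S, P k → P (T k)) : ∀ l ∈ S, P l := by
  intro l hl
  obtain ⟨j, -, rfl⟩ := h.reach k hk l hl
  clear hl
  induction j with
  | zero => exact hP
  | succ n ih => rw [Function.iterate_succ_apply']; exact hs _ (h.iter hk n) ih

structure Cen (S : Finset ℤ) (T : ℤ → ℤ) (b a : ℤ) : Prop where
  hb : b ∈ S
  ha : a ∈ S
  lt : b < a
  side : ∀ k ∈ S, k ≤ b ∨ a ≤ k
  Tb : a ≤ T b
  Ta : T a ≤ b

lemma exists_cen {S : Finset ℤ} {T : ℤ → ℤ} {r : ℕ} (h : Cyc S T r) (hr : 2 ≤ r) :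
    ∃ b a, Cen S T b a := by
  have hne : ∀ k ∈ S, T k ≠ k := fun k hk e => by
    have := Nat.le_of_dvd one_pos (h.per k hk 1 e); omega
  have h1 : (S.filter fun k => k < T k).Nonempty := by
    refine ⟨S.min' h.ne, Finset.mem_filter.2 ⟨S.min'_mem _, ?_⟩⟩
    exact lt_of_le_of_ne (S.min'_le _ (h.maps _ (S.min'_mem _))) (hne _ (S.min'_mem _)).symm
  obtain ⟨hb, hb'⟩ := Finset.mem_filter.1 (Finset.max'_mem _ h1)
  have hbm := fun k => Finset.le_max' (S.filter fun k => k < T k) k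
  set b := (S.filter fun k => k < T k).max' h1
  have h2 : (S.filter fun k => b < k).Nonempty := ⟨T b, Finset.mem_filter.2 ⟨h.maps _ hb, hb'⟩⟩
  obtain ⟨ha, ha'⟩ := Finset.mem_filter.1 (Finset.min'_mem _ h2)
  have ham := fun k => Finset.min'_le (S.filter fun k => b < k) k
  set a := (S.filter fun k => b < k).min' h2
  have side : ∀ k ∈ S, k ≤ b ∨ a ≤ k := by
    intro k hk
    rcases le_or_gt k b with h | h
    · exact Or.inl h
    · exact Or.inr (ham k (Finset.mem_filter.2 ⟨hk, h⟩))
  refine ⟨b, a, hb, ha, ha', side, ?_, ?_⟩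
  · rcases side _ (h.maps b hb) with h | h <;> omega
  · rcases side _ (h.maps a ha) with h' | h'
    · exact h'
    · exfalso
      have h3 := hne a ha
      have := hbm a (Finset.mem_filter.2 ⟨ha, by omega⟩)
      omega

structure Spi (S : Finset ℤ) (T : ℤ → ℤ) (b a z w y : ℤ) : Prop where
  hz : z ∈ S
  hw : w ∈ S
  hy : y ∈ S
  zb : z ≤ b
  aw : a ≤ w
  wy : w < y
  Tw : T w ≤ z
  Tz : y ≤ T z
  Ty : a ≤ T y
  sw : ∀ k ∈ S, a ≤ k → k < y → T k ≤ b

def NL (T : ℤ → ℤ) (b k : ℤ) : Prop := k ≤ b ∧ T k ≤ b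
def NR (T : ℤ → ℤ) (a k : ℤ) : Prop := a ≤ k ∧ a ≤ T k
def Inn (S : Finset ℤ) (T : ℤ → ℤ) (b a k : ℤ) : Prop :=
  (∀ l ∈ S, NL T b l → l < k) ∧ (∀ l ∈ S, NR T a l → k < l)

lemma spiral_aux {S : Finset ℤ} {T : ℤ → ℤ} {r : ℕ} (h : Cyc S T r) {b a : ℤ} (hc : Cen S T b a)
    {k : ℤ} (hk : k ∈ S) (hin : Inn S T b a k) (hkb : k ≤ b) (hout : ¬ Inn S T b a (T k)) :
    ∃ z w y, Spi S T b a z w y := by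
  classical
  have hlt := hc.lt
  have hTk : a ≤ T k := by
    rcases hc.side _ (h.maps k hk) with h' | h'
    · exact absurd (hin.1 k hk ⟨hkb, h'⟩) (lt_irrefl _)
    · exact h'
  have h1 : ∃ l ∈ S, NR T a l ∧ l ≤ T k := by
    by_contra hcon
    push Not at hcon
    exact hout ⟨fun l _ hl' => by have := hl'.1; omega, hcon⟩
  obtain ⟨l, hl, hl1, hl2⟩ := h1
  have hne : (S.filter fun k => NR T a k).Nonempty := ⟨l, Finset.mem_filter.2 ⟨hl, hl1⟩⟩
  obtain ⟨hy, hy'⟩ := Finset.mem_filter.1 (Finset.min'_mem _ hne)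
  have hym := fun k => Finset.min'_le (S.filter fun k => NR T a k) k
  set y := (S.filter fun k => NR T a k).min' hne
  have hyl : y ≤ l := hym l (Finset.mem_filter.2 ⟨hl, hl1⟩)
  have hsw : ∀ k ∈ S, a ≤ k → k < y → T k ≤ b := by
    intro k hk h1 h2
    rcases hc.side _ (h.maps k hk) with h' | h'
    · exact h'
    · have := hym k (Finset.mem_filter.2 ⟨hk, h1, h'⟩); omega
  have hay : a < y := by
    rcases lt_or_eq_of_le hy'.1 with h' | h'
    · exact h'
    · have h1 := hy'.2; rw [← h'] at h1; have := hc.Ta; omega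
  have hne2 : (S.filter fun k => k ≤ b ∧ Inn S T b a k ∧ y ≤ T k).Nonempty :=
    ⟨k, Finset.mem_filter.2 ⟨hk, hkb, hin, by omega⟩⟩
  obtain ⟨hz, hzb, hzin, hTz⟩ := Finset.mem_filter.1 (Finset.max'_mem _ hne2)
  have hzm := fun k => Finset.le_max' (S.filter fun k => k ≤ b ∧ Inn S T b a k ∧ y ≤ T k) k
  set z := (S.filter fun k => k ≤ b ∧ Inn S T b a k ∧ y ≤ T k).max' hne2
  by_cases hw : ∃ w ∈ S, a ≤ w ∧ w < y ∧ T w ≤ z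
  · obtain ⟨w, hw, h1, h2, h3⟩ := hw
    exact ⟨z, w, y, hz, hw, hy, hzb, h1, h2, h3, hTz, hy'.2, hsw⟩
  · exfalso
    push Not at hw
    have := h.inv (fun k => z < k ∧ k < y) hc.ha ⟨by omega, hay⟩ (by
      rintro m hm ⟨hm1, hm2⟩
      rcases hc.side m hm with h' | h'
      · have hmin : Inn S T b a m := ⟨fun l hl hl' => (hzin.1 l hl hl').trans hm1, fun l hl hl' => by
          have := hl'.1; omega⟩
        have hTm : a ≤ T m := by
          rcases hc.side _ (h.maps m hm) with h'' | h''
          · exact absurd (hmin.1 m hm ⟨h', h''⟩) (lt_irrefl _)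
          · exact h''
        refine ⟨by omega, ?_⟩
        by_contra hcon
        have := hzm m (Finset.mem_filter.2 ⟨hm, h', hmin, by omega⟩)
        omega
      · exact ⟨hw m hm h' hm2, by have := hsw m hm h' hm2; omega⟩) z hz
    omega

def negS (S : Finset ℤ) : Finset ℤ := S.image (fun k => -k)
def negT (T : ℤ → ℤ) : ℤ → ℤ := fun k => - T (-k)

lemma mem_negS {S : Finset ℤ} {k : ℤ} : k ∈ negS S ↔ -k ∈ S := by
  unfold negS
  rw [Finset.mem_image]
  constructor
  · rintro ⟨l, hl, rfl⟩; simpa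
  · intro h; exact ⟨_, h, by simp⟩

lemma negT_iter (T : ℤ → ℤ) (j : ℕ) (k : ℤ) : (negT T)^[j] k = - T^[j] (-k) := by
  induction j with
  | zero => simp
  | succ n ih => rw [Function.iterate_succ_apply', Function.iterate_succ_apply', ih]; simp [negT]

lemma Cyc.neg {S : Finset ℤ} {T : ℤ → ℤ} {r : ℕ} (h : Cyc S T r) : Cyc (negS S) (negT T) r := by
  refine ⟨fun k hk => ?_, fun k hk l hl => ?_, fun k hk j hj => ?_, fun k hk => ?_, ?_⟩
  · rw [mem_negS] at *; simpa [negT] using h.maps _ hk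
  · rw [mem_negS] at *
    obtain ⟨j, hj, hj'⟩ := h.reach _ hk _ hl
    exact ⟨j, hj, by rw [negT_iter, hj']; simp⟩
  · rw [mem_negS] at *
    rw [negT_iter] at hj
    exact h.per _ hk j (by omega)
  · rw [mem_negS] at *
    rw [negT_iter, h.per' _ hk]; simp
  · exact h.ne.image _

lemma Cen.neg {S : Finset ℤ} {T : ℤ → ℤ} {b a : ℤ} (h : Cen S T b a) : Cen (negS S) (negT T) (-a) (-b) := by
  refine ⟨mem_negS.2 (by simpa using h.ha), mem_negS.2 (by simpa using h.hb), neg_lt_neg h.lt, fun k hk => ?_, ?_, ?_⟩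
  · have := h.side _ (mem_negS.1 hk); omega
  · simpa [negT] using h.Ta
  · simpa [negT] using h.Tb

lemma spiral {S : Finset ℤ} {T : ℤ → ℤ} {r : ℕ} (h : Cyc S T r) {b a : ℤ} (hc : Cen S T b a)
    (hns : ∃ k ∈ S, NL T b k ∨ NR T a k) :
    (∃ z w y, Spi S T b a z w y) ∨ ∃ z w y, Spi (negS S) (negT T) (-a) (-b) z w y := by
  have hlt := hc.lt
  have hTa := hc.Ta
  have h1 : ∃ k ∈ S, Inn S T b a k ∧ ¬ Inn S T b a (T k) := by
    by_contra hcon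
    push Not at hcon
    have hall := h.inv (Inn S T b a) hc.ha (by
      refine ⟨fun l hl hl' => by have := hl'.1; omega, fun l hl hl' => ?_⟩
      rcases lt_or_eq_of_le hl'.1 with h' | h'
      · exact h'
      · have := hl'.2; rw [← h'] at this; omega) hcon
    obtain ⟨k, hk, hk' | hk'⟩ := hns
    · exact lt_irrefl _ ((hall k hk).1 k hk hk')
    · exact lt_irrefl _ ((hall k hk).2 k hk hk')
  obtain ⟨k, hk, hin, hout⟩ := h1
  have hflip : ∀ k, Inn (negS S) (negT T) (-a) (-b) k ↔ Inn S T b a (-k) := by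
    intro k
    constructor
    · intro hh
      refine ⟨fun l hl hl' => ?_, fun l hl hl' => ?_⟩
      · have := hh.2 (-l) (mem_negS.2 (by simpa)) ⟨by have := hl'.1; omega, by
          have := hl'.2; simp only [negT, neg_neg]; omega⟩
        omega
      · have := hh.1 (-l) (mem_negS.2 (by simpa)) ⟨by have := hl'.1; omega, by
          have := hl'.2; simp only [negT, neg_neg]; omega⟩
        omega
    · intro hh
      refine ⟨fun l hl hl' => ?_, fun l hl hl' => ?_⟩
      · have := hh.2 (-l) (mem_negS.1 hl) ⟨by have := hl'.1; omega, by
          have := hl'.2; simp only [negT] at this; omega⟩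
        omega
      · have := hh.1 (-l) (mem_negS.1 hl) ⟨by have := hl'.1; omega, by
          have := hl'.2; simp only [negT] at this; omega⟩
        omega
  rcases hc.side k hk with h' | h'
  · exact Or.inl (spiral_aux h hc hk hin h' hout)
  · refine Or.inr (spiral_aux h.neg hc.neg (k := -k) (mem_negS.2 (by simpa)) ?_ (by omega) ?_)
    · rw [hflip]; simpa
    · rw [hflip]; simpa [negT] using hout


def CoreOut (h : ℝ → ℝ) (S : Finset ℤ) (T : ℤ → ℤ) (c : ℝ) (q : ℕ) : Prop :=
  ∃ a b : ℕ → ℝ, (∀ j, a (j+q) = a j) ∧ (∀ j, b (j+q) = b j) ∧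
    (∀ j, a j = c ∨ ∃ k ∈ S, a j = (k:ℤ)) ∧ (∀ j, b j = c ∨ ∃ k ∈ S, b j = (k:ℤ)) ∧
    (∀ j, uIcc (a (j+1)) (b (j+1)) ⊆ uIcc (h (a j)) (h (b j))) ∧
    ∀ y : ℕ → ℝ, (∀ j, y j ∈ uIcc (a j) (b j)) → (∀ j, y (j+q) = y j) → ∀ d, 0 < d → d < q →
      (∃ t, ∃ k ∈ S, (k:ℝ) ∈ uIcc (y t) (y (t+d))) ∧
      ∀ k ∈ S, ¬ ∀ t, |((T^[t] k : ℤ) : ℝ) - y t| < 1 ∧ |((T^[t] k : ℤ) : ℝ) - y (t+d)| < 1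

lemma core_one {h : ℝ → ℝ} {S : Finset ℤ} {T : ℤ → ℤ} {b a : ℤ} (hc : Cen S T b a)
    (hh : ∀ k ∈ S, h (k:ℤ) = (T k : ℤ)) (c : ℝ) : CoreOut h S T c 1 := by
  refine ⟨fun _ => b, fun _ => a, fun _ => rfl, fun _ => rfl, fun _ => Or.inr ⟨b, hc.hb, rfl⟩,
    fun _ => Or.inr ⟨a, hc.ha, rfl⟩, fun j => ?_, fun y _ _ d h1 h2 => by omega⟩
  rw [hh _ hc.ha, hh _ hc.hb]
  have h1 : (a:ℝ) ≤ T b := by exact_mod_cast hc.Tb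
  have h2 : (T a:ℝ) ≤ b := by exact_mod_cast hc.Ta
  have h3 : (b:ℝ) < a := by exact_mod_cast hc.lt
  apply uIcc_subset_uIcc <;> rw [mem_uIcc] <;> right <;> constructor <;> linarith

lemma core_neg {h : ℝ → ℝ} {S : Finset ℤ} {T : ℤ → ℤ} {c : ℝ} {q : ℕ}
    (H : CoreOut (fun x => - h (-x)) (negS S) (negT T) (-c) q) : CoreOut h S T c q := by
  obtain ⟨a, b, h1, h2, h3, h4, h5, h6⟩ := H
  have hneg : ∀ u v w : ℝ, u ∈ uIcc v w ↔ -u ∈ uIcc (-v) (-w) := by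
    intro u v w
    simp only [mem_uIcc, neg_le_neg_iff]
    tauto
  refine ⟨fun j => - a j, fun j => - b j, fun j => by simp only [h1], fun j => by simp only [h2], fun j => ?_,
    fun j => ?_, fun j => ?_, ?_⟩
  · rcases h3 j with h | ⟨k, hk, h⟩
    · left; simp [h]
    · right; exact ⟨-k, mem_negS.1 hk, by simp [h]⟩
  · rcases h4 j with h | ⟨k, hk, h⟩
    · left; simp [h]
    · right; exact ⟨-k, mem_negS.1 hk, by simp [h]⟩
  · intro u hu
    rw [hneg] at hu ⊢
    simp only [neg_neg] at hu
    exact h5 j hu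
  · intro y hy hyq d hd hd'
    obtain ⟨⟨t, k, hk, hk'⟩, h8⟩ := h6 (fun j => - y j) (fun j => by
      rw [hneg]; simpa using hy j) (fun j => by simp only [hyq]) d hd hd'
    refine ⟨⟨t, -k, mem_negS.1 hk, by rw [hneg]; simpa using hk'⟩, fun k hk hcon => ?_⟩
    refine h8 (-k) (mem_negS.2 (by simpa)) fun t => ?_
    rw [negT_iter, neg_neg]
    have := hcon t
    push_cast
    rw [show -((T^[t] k : ℤ):ℝ) - - y t = -(((T^[t] k : ℤ):ℝ) - y t) by ring,
      show -((T^[t] k : ℤ):ℝ) - - y (t+d) = -(((T^[t] k : ℤ):ℝ) - y (t+d)) by ring, abs_neg, abs_neg]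
    exact this

lemma core_even {h : ℝ → ℝ} {S : Finset ℤ} {T : ℤ → ℤ} {b a z w y : ℤ}
    (hc : Cen S T b a) (hs : Spi S T b a z w y)
    (hh : ∀ k ∈ S, h (k:ℤ) = (T k : ℤ)) {c : ℝ} (hbc : b < c) (hca : c < a) (hfix : h c = c) {q : ℕ}
    (hq : 2 ≤ q) (hq2 : q % 2 = 0) : CoreOut h S T c q := by
  have hzb : (z:ℝ) ≤ b := by exact_mod_cast hs.zb
  have haw : (a:ℝ) ≤ w := by exact_mod_cast hs.aw
  have hwy : (w:ℝ) < y := by exact_mod_cast hs.wy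
  have hTw : (T w:ℝ) ≤ z := by exact_mod_cast hs.Tw
  have hTz : (y:ℝ) ≤ T z := by exact_mod_cast hs.Tz
  have hTy : (a:ℝ) ≤ T y := by exact_mod_cast hs.Ty
  have ew := hh w hs.hw
  have ez := hh z hs.hz
  have ey := hh y hs.hy
  refine ⟨fun j => if j % 2 = 1 then z else if j % q = 0 then w else c,
    fun j => if j % 2 = 1 then c else if j % q = 0 then y else w, ?_, ?_, ?_, ?_, ?_, ?_⟩
  · intro j
    have h1 : (j+q) % 2 = j % 2 := by omega
    simp only [h1, Nat.add_mod_right]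
  · intro j
    have h1 : (j+q) % 2 = j % 2 := by omega
    simp only [h1, Nat.add_mod_right]
  · intro j
    simp only
    split_ifs
    · exact Or.inr ⟨z, hs.hz, rfl⟩
    · exact Or.inr ⟨w, hs.hw, rfl⟩
    · exact Or.inl rfl
  · intro j
    simp only
    split_ifs
    · exact Or.inl rfl
    · exact Or.inr ⟨y, hs.hy, rfl⟩
    · exact Or.inr ⟨w, hs.hw, rfl⟩
  · intro j
    by_cases hj : j % 2 = 1
    · have hj' : ¬ (j+1) % 2 = 1 := by omega
      simp only [hj, hj', if_true, if_false]
      split_ifs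
      all_goals
        simp only [ew, ez, ey, hfix]
        apply uIcc_subset_uIcc <;> rw [mem_uIcc] <;> right <;> constructor <;> linarith
    · have hj' : (j+1) % 2 = 1 := by omega
      simp only [hj, hj', if_true, if_false]
      split_ifs
      · simp only [ew, ez, ey, hfix]
        apply uIcc_subset_uIcc <;> rw [mem_uIcc] <;> left <;> constructor <;> linarith
      · simp only [ew, ez, ey, hfix]
        apply uIcc_subset_uIcc <;> rw [mem_uIcc] <;> right <;> constructor <;> linarith
  · intro Y hY hYq d hd hdq
    have h0 : (w:ℝ) ≤ Y 0 ∧ Y 0 ≤ y := by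
      have := hY 0
      simp at this
      rwa [uIcc_of_le hwy.le] at this
    have hodd : ∀ j, j % 2 = 1 → (z:ℝ) ≤ Y j ∧ Y j ≤ c := by
      intro j hj
      have := hY j
      simp only [hj, if_true] at this
      rwa [uIcc_of_le (by linarith)] at this
    have hev : ∀ j, 0 < j → j < q → j % 2 = 0 → c ≤ Y j ∧ Y j ≤ w := by
      intro j hj1 hj2 hj
      have := hY j
      simp only [hj, Nat.mod_eq_of_lt hj2, hj1.ne', if_false, zero_ne_one] at this
      rwa [uIcc_of_le (by linarith)] at this
    have hdw : Y d ≤ w := by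
      rcases Nat.mod_two_eq_zero_or_one d with h | h
      · exact (hev d hd hdq h).2
      · linarith [(hodd d h).2]
    refine ⟨⟨0, w, hs.hw, ?_⟩, fun k hk hcon => ?_⟩
    · rw [mem_uIcc, zero_add]; right; exact ⟨hdw, h0.1⟩
    · have h1 := hcon 0
      simp only [Function.iterate_zero, id, zero_add, abs_lt] at h1
      have k0 : k = w := by
        have h2 : (w:ℝ) < k + 1 := by linarith [h1.1.1]
        have h3 : (k:ℝ) < w + 1 := by linarith [h1.2.2]
        norm_cast at h2 h3; omega
      subst k0
      have h1 := hcon 1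
      simp only [Function.iterate_one, abs_lt] at h1
      have k1 : T k = z := by
        have h2 : (z:ℝ) < T k + 1 := by linarith [h1.1.1, (hodd 1 rfl).1]
        have h3 := hs.Tw
        norm_cast at h2; omega
      rcases Nat.lt_or_ge 2 q with h2 | h2
      · have h3 := hcon 2
        rw [show T^[2] k = T (T k) from rfl, k1] at h3
        simp only [abs_lt] at h3
        have h4 := hev 2 (by norm_num) h2 rfl
        have h5 : (T z : ℝ) < k + 1 := by linarith [h3.1.2]
        have h6 := hs.Tz
        have h7 := hs.wy
        norm_cast at h5; omega
      · obtain rfl : q = 2 := by omega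
        obtain rfl : d = 1 := by omega
        have h3 := hYq 0
        rw [zero_add] at h3
        have h4 : Y (1+1) = Y 0 := h3
        rw [h4, k1] at h1
        have h5 : (k:ℝ) < z + 1 := by linarith [h1.2.1]
        have h6 := hs.zb
        have h7 := hs.aw
        have h8 := hc.lt
        norm_cast at h5; omega

lemma succ_mod' (j : ℕ) {q : ℕ} (hq : 2 ≤ q) :
    (j % q + 1 = q ∧ (j+1) % q = 0) ∨ (j % q + 1 < q ∧ (j+1) % q = j % q + 1) := by
  have h1 := Nat.mod_lt j (show 0 < q by omega)
  rcases Nat.lt_or_ge (j % q + 1) q with h | h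
  · right
    refine ⟨h, ?_⟩
    rw [Nat.add_mod, Nat.mod_eq_of_lt (show 1 < q by omega), Nat.mod_eq_of_lt h]
  · left
    have h2 : j % q + 1 = q := by omega
    refine ⟨h2, ?_⟩
    rw [Nat.add_mod, Nat.mod_eq_of_lt (show 1 < q by omega), h2, Nat.mod_self]

lemma core_long {h : ℝ → ℝ} {S : Finset ℤ} {T : ℤ → ℤ} {r : ℕ} (hy : Cyc S T r) {b a z w y : ℤ}
    (hc : Cen S T b a) (hs : Spi S T b a z w y)
    (hh : ∀ k ∈ S, h (k:ℤ) = (T k : ℤ)) {c : ℝ} (hbc : b < c) (hca : c < a) (hfix : h c = c) {q : ℕ}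
    (hr : 3 ≤ r) (hq : r + 2 ≤ q) : CoreOut h S T c q := by
  have hay : a < y := lt_of_le_of_lt hs.aw hs.wy
  -- predecessor
  have hne : (S.filter fun k => k < y).Nonempty := ⟨a, Finset.mem_filter.2 ⟨hc.ha, hay⟩⟩
  obtain ⟨hym, hym'⟩ := Finset.mem_filter.1 (Finset.max'_mem _ hne)
  have hpm : ∀ k ∈ S, k < y → k ≤ (S.filter fun k => k < y).max' hne := fun k hk hk' => 
    Finset.le_max' (S.filter fun k => k < y) k (Finset.mem_filter.2 ⟨hk, hk'⟩)
  set m := (S.filter fun k => k < y).max' hne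
  have ham : a ≤ m := hpm a hc.ha hay
  have hTm : T m ≤ b := hs.sw m hym ham hym'
  -- first time
  have hex : ∃ j, y ≤ T^[j] a := by
    obtain ⟨j, -, hj⟩ := hy.reach a hc.ha y hs.hy
    exact ⟨j, hj.ge⟩
  classical
  obtain ⟨D, hD1, hD2, hDr⟩ : ∃ D, y ≤ T^[D] a ∧ (∀ j < D, T^[j] a < y) ∧ D < r := by
    refine ⟨Nat.find hex, Nat.find_spec hex, fun j hj => not_le.1 (Nat.find_min hex hj), ?_⟩
    obtain ⟨j, hj, hj'⟩ := hy.reach a hc.ha y hs.hy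
    exact lt_of_le_of_lt (Nat.find_min' hex hj'.ge) hj
  have hD0 : 0 < D := by
    rcases Nat.eq_zero_or_pos D with h | h
    · subst h; simp at hD1; omega
    · exact h
  obtain ⟨t, ht, ht2⟩ : ∃ t, 1 + t + D = q ∧ 2 ≤ t := ⟨q - 1 - D, by omega, by omega⟩
  have rbc := hbc
  have rTb : (a:ℝ) ≤ T b := by exact_mod_cast hc.Tb
  have rTa : (T a:ℝ) ≤ b := by exact_mod_cast hc.Ta
  have rTm : (T m:ℝ) ≤ b := by exact_mod_cast hTm
  have rTy : (a:ℝ) ≤ T y := by exact_mod_cast hs.Ty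
  have ram : (a:ℝ) ≤ m := by exact_mod_cast ham
  have rmy : (m:ℝ) < y := by exact_mod_cast hym'
  have rD1 : (y:ℝ) ≤ T^[D] a := by exact_mod_cast hD1
  have hit : ∀ j, T^[j] a ∈ S := fun j => hy.iter hc.ha j
  refine ⟨fun j => if j % q = 0 then m else if j % q ≤ t then b else c,
    fun j => if j % q = 0 then y else if j % q ≤ t then a else ((T^[j % q - t - 1] a : ℤ) : ℝ),
    ?_, ?_, ?_, ?_, ?_, ?_⟩
  · intro j
    simp only [Nat.add_mod_right]
  · intro j
    simp only [Nat.add_mod_right]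
  · intro j
    simp only
    split_ifs
    · exact Or.inr ⟨m, hym, rfl⟩
    · exact Or.inr ⟨b, hc.hb, rfl⟩
    · exact Or.inl rfl
  · intro j
    simp only
    split_ifs
    · exact Or.inr ⟨y, hs.hy, rfl⟩
    · exact Or.inr ⟨a, hc.ha, rfl⟩
    · exact Or.inr ⟨_, hit _, rfl⟩
  · intro j
    simp only
    rcases succ_mod' j (show 2 ≤ q by omega) with ⟨e1, e2⟩ | ⟨e1, e2⟩
    · rw [e2, if_pos rfl, if_pos rfl, if_neg (show j % q ≠ 0 by omega), if_neg (show j % q ≠ 0 by omega),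
        if_neg (show ¬ j % q ≤ t by omega), if_neg (show ¬ j % q ≤ t by omega), hfix, hh _ (hit _),
        ← Function.iterate_succ_apply' T, show (j % q - t - 1).succ = D by omega]
      apply uIcc_subset_uIcc <;> rw [mem_uIcc] <;> left <;> constructor <;> linarith
    · rw [e2, if_neg (show j % q + 1 ≠ 0 by omega), if_neg (show j % q + 1 ≠ 0 by omega)]
      by_cases h0 : j % q = 0
      · rw [h0, if_pos (by omega), if_pos (by omega), if_pos rfl, if_pos rfl, hh _ hym, hh _ hs.hy]
        apply uIcc_subset_uIcc <;> rw [mem_uIcc] <;> left <;> constructor <;> linarith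
      · rw [if_neg h0, if_neg h0]
        rcases lt_trichotomy (j % q) t with h1 | h1 | h1
        · rw [if_pos (by omega), if_pos (by omega), if_pos (by omega), if_pos (by omega), 
            hh _ hc.ha, hh _ hc.hb]
          apply uIcc_subset_uIcc <;> rw [mem_uIcc] <;> right <;> constructor <;> linarith
        · rw [if_neg (by omega), if_neg (by omega), if_pos (by omega), if_pos (by omega), 
            hh _ hc.ha, hh _ hc.hb, show j % q + 1 - t - 1 = 0 by omega]
          apply uIcc_subset_uIcc <;> rw [mem_uIcc] <;> right <;> constructor <;> 
            (try simp only [Function.iterate_zero, id]) <;> linarith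
        · rw [if_neg (by omega), if_neg (by omega), if_neg (by omega), if_neg (by omega), hfix,
            hh _ (hit _), ← Function.iterate_succ_apply' T, 
            show j % q + 1 - t - 1 = (j % q - t - 1).succ by omega]
  · intro Y hY hYq d hd hdq
    have h0 : (m:ℝ) ≤ Y 0 ∧ Y 0 ≤ y := by
      have := hY 0
      simp at this
      rwa [uIcc_of_le rmy.le] at this
    have hJ : ∀ j, 0 < j → j ≤ t → (b:ℝ) ≤ Y j ∧ Y j ≤ a := by
      intro j hj1 hj2
      have := hY j
      simp only [Nat.mod_eq_of_lt (show j < q by omega), hj1.ne', hj2, if_false, if_true] at this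
      rwa [uIcc_of_le (by linarith)] at this
    have hW : ∀ j, t < j → j < q → Y j ∈ uIcc c ((T^[j - t - 1] a : ℤ) : ℝ) := by
      intro j hj1 hj2
      have := hY j
      simpa only [Nat.mod_eq_of_lt hj2, show j ≠ 0 by omega, show ¬ j ≤ t by omega, if_false] using this
    have hdm : Y d ≤ m := by
      rcases Nat.lt_or_ge t d with h | h
      · have h1 := hpm _ (hit (d - t - 1)) (hD2 (d - t - 1) (by omega))
        have h2 : ((T^[d - t - 1] a : ℤ) : ℝ) ≤ m := by exact_mod_cast h1
        rcases mem_uIcc.1 (hW d h hdq) with h3 | h3 <;> linarith [h3.2]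
      · linarith [(hJ d hd h).2]
    refine ⟨⟨0, m, hym, ?_⟩, fun k hk hcon => ?_⟩
    · rw [mem_uIcc, zero_add]; right; exact ⟨hdm, h0.1⟩
    · have h1 := hcon 0
      simp only [Function.iterate_zero, id, zero_add, abs_lt] at h1
      have k0 : k = m := by
        have h2 : (m:ℝ) < k + 1 := by linarith [h1.1.1]
        have h3 : (k:ℝ) < m + 1 := by linarith [h1.2.2]
        norm_cast at h2 h3; omega
      rw [k0] at hcon
      have hJ' : ∀ j, 0 < j → j ≤ 3 → T^[j] m = b ∨ T^[j] m = a := by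
        intro j hj1 hj2
        have h3 : (b:ℝ) ≤ Y j ∧ Y j ≤ a := by
          rcases Nat.lt_or_ge t j with h | h
          · have := hW j h (by omega)
            rw [show j - t - 1 = 0 by omega] at this
            simp only [Function.iterate_zero, id] at this
            rw [uIcc_of_le hca.le] at this
            exact ⟨by linarith [this.1], this.2⟩
          · exact hJ j hj1 h
        have h4 := (hcon j).1
        rw [abs_lt] at h4
        have h5 : (b:ℝ) < T^[j] m + 1 := by linarith [h4.1]
        have h6 : (T^[j] m : ℝ) < a + 1 := by linarith [h4.2]
        norm_cast at h5 h6
        rcases hc.side _ (hy.iter hym j) with h7 | h7 <;> omega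
      have hb1 := hJ' 1 (by omega) (by omega)
      have hb2 := hJ' 2 (by omega) (by omega)
      have hb3 := hJ' 3 (by omega) (by omega)
      rw [show T^[3] m = T (T (T m)) from rfl] at hb3
      rw [show T^[2] m = T (T m) from rfl] at hb2
      rw [show T^[1] m = T m from rfl] at hb1
      have hlt := hc.lt
      have e1 : T m = b := by omega
      rw [e1] at hb2 hb3
      have e2 : T b = a := by have := hc.Tb; omega
      rw [e2] at hb3
      have e3 : T a = b := by have := hc.Ta; omega
      have := Nat.le_of_dvd two_pos (hy.per b hc.hb 2 (by
        rw [show T^[2] b = T (T b) from rfl, e2, e3]))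
      omega


lemma shark_cases {r q : ℕ} (h : SharkGT r q) : 2 ≤ r ∧ 1 ≤ q ∧ (q = 1 ∨
    (r % 2 = 0 ∧ q % 2 = 0 ∧ SharkGT (r/2) (q/2)) ∨
    (r % 2 = 1 ∧ 3 ≤ r ∧ 2 ≤ q ∧ (q % 2 = 0 ∨ r + 2 ≤ q))) := by
  obtain ⟨i, m, j, l, hm, hl, hp, hq, h⟩ := h
  have hm0 : 0 < m := hm.pos
  have hl0 : 0 < l := hl.pos
  have hr0 : 0 < r := by rw [hp]; positivity
  have hq0 : 0 < q := by rw [hq]; positivity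
  rw [Nat.odd_iff] at hm hl
  rcases i with _ | i
  · rw [pow_zero, one_mul] at hp
    subst hp
    rcases j with _ | j
    · rw [pow_zero, one_mul] at hq
      subst hq
      omega
    · have : q = 2 * (2^j * l) := by rw [hq]; ring
      omega
  · have hp' : r = 2 * (2^i * m) := by rw [hp]; ring
    rcases j with _ | j
    · rw [pow_zero, one_mul] at hq
      subst hq
      omega
    · have hq' : q = 2 * (2^j * l) := by rw [hq]; ring
      refine ⟨by omega, by omega, Or.inr (Or.inl ⟨by omega, by omega, i, m, j, l, Nat.odd_iff.2 hm,
        Nat.odd_iff.2 hl, by omega, by omega, by omega⟩)⟩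

lemma shark_ne : ∀ p q : ℕ, SharkGT p q → p ≠ q := by
  intro p
  induction p using Nat.strong_induction_on with
  | _ p ih =>
    rintro q h rfl
    obtain ⟨h1, h2, h3 | ⟨h3, h4, h5⟩ | h3⟩ := shark_cases h
    · omega
    · exact ih (p/2) (by omega) _ h5 rfl
    · omega

def Level (o : ℕ → ℤ) (e : ℕ) : Prop := ∀ d, 0 < d → d < e →
  (∀ j j', o (e*j) < o (e*j'+d)) ∨ (∀ j j', o (e*j'+d) < o (e*j))

def Out (f : ℝ → ℝ) (o : ℕ → ℤ) (q : ℕ) (x : ℝ) : Prop :=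
  f^[q] x = x ∧ (∀ i, (∃ s, (o s : ℝ) ≤ f^[i] x) ∧ ∃ s, f^[i] x ≤ o s) ∧
  ∀ d, 0 < d → d < q → (∃ t s, (o s : ℝ) ∈ uIcc (f^[t] x) (f^[t+d] x)) ∧
    ∀ s, ¬ ∀ t, |(o (s+t) : ℝ) - f^[t] x| < 1 ∧ |(o (s+t) : ℝ) - f^[t+d] x| < 1

lemma orb_iter {f : ℝ → ℝ} {o : ℕ → ℤ} (hfo : ∀ j, f (o j) = o (j+1)) (n j : ℕ) :
    f^[n] (o j) = o (j+n) := by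
  induction n with
  | zero => rfl
  | succ n ih => rw [Function.iterate_succ_apply', ih, hfo]; rfl

lemma glue {f : ℝ → ℝ} (hf : Continuous f) {o : ℕ → ℤ} (hfo : ∀ j, f (o j) = o (j+1))
    {e : ℕ} (he : 0 < e) (hl : Level o e) {S : Finset ℤ} {T : ℤ → ℤ} 
    (hS : ∀ k, k ∈ S ↔ ∃ j, k = o (e*j)) (hT : ∀ j n, T^[n] (o (e*j)) = o (e*(j+n)))
    {c : ℝ} {ja jb : ℕ} (hc : ∀ s < e, f^[s] c ∈ uIcc (f^[s] (o (e*jb))) (f^[s] (o (e*ja))))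
    {q : ℕ} (hq : 0 < q) (H : CoreOut (f^[e]) S T c q) : ∃ x, Out f o (e*q) x := by
  obtain ⟨a, b, h1, h2, h3, h4, h5, h6⟩ := H
  obtain ⟨x, hx, hx'⟩ := hloop_lem hf he hq h1 h2 h5
  have hv : ∀ v, (v = c ∨ ∃ k ∈ S, v = (k:ℤ)) → ∀ s < e, (∃ j, (o (e*j+s) : ℝ) ≤ f^[s] v) ∧
      ∃ j, f^[s] v ≤ o (e*j+s) := by
    rintro v (rfl | ⟨k, hk, rfl⟩) s hs
    · have := hc s hs
      rw [orb_iter hfo, orb_iter hfo] at this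
      rcases mem_uIcc.1 this with h | h
      · exact ⟨⟨_, h.1⟩, ⟨_, h.2⟩⟩
      · exact ⟨⟨_, h.1⟩, ⟨_, h.2⟩⟩
    · obtain ⟨j, rfl⟩ := (hS k).1 hk
      rw [orb_iter hfo]
      exact ⟨⟨j, le_rfl⟩, ⟨j, le_rfl⟩⟩
  have hH : ∀ j s, s < e → (∃ j', (o (e*j'+s) : ℝ) ≤ f^[e*j+s] x) ∧ ∃ j', f^[e*j+s] x ≤ o (e*j'+s) := by
    intro j s hs
    obtain ⟨⟨j1, hj1⟩, ⟨j2, hj2⟩⟩ := hv _ (h3 j) s hs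
    obtain ⟨⟨j3, hj3⟩, ⟨j4, hj4⟩⟩ := hv _ (h4 j) s hs
    rcases mem_uIcc.1 (hx' j s hs) with h | h
    · exact ⟨⟨j1, hj1.trans h.1⟩, ⟨j4, h.2.trans hj4⟩⟩
    · exact ⟨⟨j3, hj3.trans h.1⟩, ⟨j2, h.2.trans hj2⟩⟩
  have h00 := hH 0 0 he
  simp only [mul_zero, add_zero, Function.iterate_zero, id] at h00
  refine ⟨x, hx, fun i => ?_, fun d hd hdq => ?_⟩
  · obtain ⟨⟨j1, hj1⟩, ⟨j2, hj2⟩⟩ := hH (i/e) (i%e) (Nat.mod_lt _ he)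
    rw [Nat.div_add_mod] at hj1 hj2
    exact ⟨⟨_, hj1⟩, ⟨_, hj2⟩⟩
  · by_cases hde : d % e = 0
    · obtain ⟨d', rfl⟩ := Nat.dvd_of_mod_eq_zero hde
      have hd1 : 0 < d' := Nat.pos_of_ne_zero (by rintro rfl; simp at hd)
      have hd2 : d' < q := lt_of_mul_lt_mul_left hdq (Nat.zero_le e)
      obtain ⟨⟨t, k, hk, hk'⟩, h8⟩ := h6 (fun j => f^[e*j] x) (fun j => by simpa using hx' j 0 he)
        (fun j => by simp only [mul_add, Function.iterate_add_apply, hx]) d' hd1 hd2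
      refine ⟨?_, fun s hcon => ?_⟩
      · obtain ⟨j, rfl⟩ := (hS k).1 hk
        exact ⟨e*t, e*j, by rw [← mul_add]; exact hk'⟩
      · have hs : s % e = 0 := by
          by_contra hs
          have h0 := (hcon 0).1
          simp only [add_zero, Function.iterate_zero, id, abs_lt] at h0
          obtain ⟨⟨j1, hj1⟩, ⟨j2, hj2⟩⟩ := h00
          rcases hl (s % e) (Nat.pos_of_ne_zero hs) (Nat.mod_lt _ he) with h | h
          · have := h j2 (s/e)
            rw [Nat.div_add_mod] at this
            have h9 : (o s : ℝ) < o (e*j2) + 1 := by linarith [h0.2]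
            norm_cast at h9; omega
          · have := h j1 (s/e)
            rw [Nat.div_add_mod] at this
            have h9 : (o (e*j1) : ℝ) < o s + 1 := by linarith [h0.1]
            norm_cast at h9; omega
        obtain ⟨j, rfl⟩ := Nat.dvd_of_mod_eq_zero hs
        refine h8 (o (e*j)) ((hS _).2 ⟨j, rfl⟩) fun t => ?_
        rw [hT, mul_add, mul_add]
        exact hcon (e*t)
    · have hd1 := hH (d/e) (d%e) (Nat.mod_lt _ he)
      rw [Nat.div_add_mod] at hd1
      obtain ⟨⟨j1, hj1⟩, ⟨j2, hj2⟩⟩ := h00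
      obtain ⟨⟨j3, hj3⟩, ⟨j4, hj4⟩⟩ := hd1
      rcases hl (d % e) (Nat.pos_of_ne_zero hde) (Nat.mod_lt _ he) with h | h
      · have h7 := h j2 j3
        have h8 : (o (e*j2) : ℝ) < o (e*j3+d%e) := by exact_mod_cast h7
        refine ⟨⟨0, e*j2, ?_⟩, fun s hcon => ?_⟩
        · rw [zero_add, mem_uIcc]; left; exact ⟨hj2, by linarith⟩
        · have h0 := hcon 0
          simp only [add_zero, zero_add, Function.iterate_zero, id, abs_lt] at h0
          have h9 : (o s : ℝ) < o (e*j2) + 1 := by linarith [h0.1.2]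
          have h10 : (o (e*j3+d%e) : ℝ) < o s + 1 := by linarith [h0.2.1]
          norm_cast at h9 h10; omega
      · have h7 := h j1 j4
        have h8 : (o (e*j4+d%e) : ℝ) < o (e*j1) := by exact_mod_cast h7
        refine ⟨⟨0, e*j1, ?_⟩, fun s hcon => ?_⟩
        · rw [zero_add, mem_uIcc]; right; exact ⟨by linarith, hj1⟩
        · have h0 := hcon 0
          simp only [add_zero, zero_add, Function.iterate_zero, id, abs_lt] at h0
          have h9 : (o s : ℝ) < o (e*j4+d%e) + 1 := by linarith [h0.2.2]
          have h10 : (o (e*j1) : ℝ) < o s + 1 := by linarith [h0.1.1]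
          norm_cast at h9 h10; omega

theorem main1D {f : ℝ → ℝ} (hf : Continuous f) {o : ℕ → ℤ} (hfo : ∀ j, f (o j) = o (j+1)) {p : ℕ}
    (ho : ∀ i j, o i = o j ↔ i ≡ j [MOD p]) : ∀ r e q, 0 < e → p = e * r → Level o e → SharkGT r q →
    ∃ x, Out f o (e*q) x := by
  intro r
  induction r using Nat.strong_induction_on with
  | _ r ih =>
  intro e q he hp hl hsh
  obtain ⟨hr, hq, hcase⟩ := shark_cases hsh
  have hκ : ∀ i j, o (e*i) = o (e*j) ↔ i ≡ j [MOD r] := by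
    intro i j
    rw [ho, hp]
    exact ⟨fun h => Nat.ModEq.mul_left_cancel' he.ne' h, fun h => Nat.ModEq.mul_left' e h⟩
  set S : Finset ℤ := (Finset.range r).image (fun j => o (e*j)) with hSdef
  set T : ℤ → ℤ := fun k => ⌊f^[e] (k:ℝ)⌋ with hTdef
  have hS : ∀ k, k ∈ S ↔ ∃ j, k = o (e*j) := by
    intro k
    rw [hSdef, Finset.mem_image]
    constructor
    · rintro ⟨j, -, rfl⟩; exact ⟨j, rfl⟩
    · rintro ⟨j, rfl⟩
      exact ⟨j % r, Finset.mem_range.2 (Nat.mod_lt _ (by omega)), (hκ _ _).2 (Nat.mod_modEq j r)⟩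
  have hT1 : ∀ j, T (o (e*j)) = o (e*(j+1)) := by
    intro j
    simp only [hTdef]
    rw [orb_iter hfo, Int.floor_intCast]; rfl
  have hT : ∀ j n, T^[n] (o (e*j)) = o (e*(j+n)) := by
    intro j n
    induction n with
    | zero => rfl
    | succ n ih => rw [Function.iterate_succ_apply', ih, hT1]; rfl
  have hh : ∀ k ∈ S, f^[e] (k:ℤ) = (T k : ℤ) := by
    intro k hk
    obtain ⟨j, rfl⟩ := (hS k).1 hk
    rw [hT1, orb_iter hfo]; rfl
  have hcyc : Cyc S T r := by
    refine ⟨fun k hk => ?_, fun k hk l hl => ?_, fun k hk n hn => ?_, fun k hk => ?_, ⟨o (e*0), (hS _).2 ⟨0, rfl⟩⟩⟩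
    · obtain ⟨j, rfl⟩ := (hS k).1 hk
      rw [hT1]; exact (hS _).2 ⟨_, rfl⟩
    · obtain ⟨i, rfl⟩ := (hS k).1 hk
      obtain ⟨j, rfl⟩ := (hS l).1 hl
      refine ⟨(j + (r - i % r)) % r, Nat.mod_lt _ (by omega), ?_⟩
      rw [hT, hκ]
      have h1 : i % r < r := Nat.mod_lt _ (by omega)
      calc i + (j + (r - i % r)) % r ≡ i % r + (j + (r - i % r)) [MOD r] :=
            Nat.ModEq.add (Nat.mod_modEq i r).symm (Nat.mod_modEq _ r)
        _ = j + r := by omega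
        _ ≡ j [MOD r] := by simp [Nat.ModEq]
    · obtain ⟨i, rfl⟩ := (hS k).1 hk
      rw [hT, hκ] at hn
      exact (Nat.modEq_zero_iff_dvd).1 (Nat.ModEq.add_left_cancel' i hn)
    · obtain ⟨i, rfl⟩ := (hS k).1 hk
      rw [hT, hκ]
      simp [Nat.ModEq]
  obtain ⟨b, a, hcen⟩ := exists_cen hcyc hr
  obtain ⟨jb, hjb⟩ := (hS b).1 hcen.hb
  obtain ⟨ja, hja⟩ := (hS a).1 hcen.ha
  have rTb : (a:ℝ) ≤ T b := by exact_mod_cast hcen.Tb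
  have rTa : (T a:ℝ) ≤ b := by exact_mod_cast hcen.Ta
  have rba : (b:ℝ) < a := by exact_mod_cast hcen.lt
  obtain ⟨c, hc1, hc2⟩ := hloop_lem hf (a := fun _ => (b:ℝ)) (b := fun _ => (a:ℝ)) he one_pos 
    (fun _ => rfl) (fun _ => rfl) (fun i => by
      rw [hh b hcen.hb, hh a hcen.ha]
      apply uIcc_subset_uIcc <;> rw [mem_uIcc] <;> right <;> constructor <;> linarith)
  rw [mul_one] at hc1
  have hc3 : ∀ s < e, f^[s] c ∈ uIcc (f^[s] (o (e*jb))) (f^[s] (o (e*ja))) := by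
    intro s hs
    have := hc2 0 s hs
    rw [mul_zero, zero_add, hja, hjb] at this
    exact this
  have hc4 := hc2 0 0 he
  rw [uIcc_of_le (by simpa using rba.le)] at hc4
  simp only [mul_zero, zero_add, Function.iterate_zero, id] at hc4
  have hbc : (b:ℝ) < c := by
    refine lt_of_le_of_ne hc4.1 ?_
    intro h
    rw [← h, hh b hcen.hb] at hc1
    linarith
  have hca : c < a := by
    refine lt_of_le_of_ne hc4.2 ?_
    intro h
    rw [h, hh a hcen.ha] at hc1
    linarith
  by_cases hns : ∃ k ∈ S, NL T b k ∨ NR T a k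
  · refine glue hf hfo he hl hS hT hc3 hq ?_
    rcases spiral hcyc hcen hns with ⟨z, w, y, hsp⟩ | ⟨z, w, y, hsp⟩
    · rcases hcase with rfl | ⟨h1, h2, h3⟩ | ⟨h1, h2, h3, h4 | h4⟩
      · exact core_one hcen hh c
      · exact core_even hcen hsp hh hbc hca hc1 (by omega) h2
      · exact core_even hcen hsp hh hbc hca hc1 h3 h4
      · exact core_long hcyc hcen hsp hh hbc hca hc1 h2 h4
    · have hh' : ∀ k ∈ negS S, (fun x : ℝ => - f^[e] (-x)) (k:ℤ) = (negT T k : ℤ) := by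
        intro k hk
        have := hh (-k) (mem_negS.1 hk)
        push_cast at this
        simp only [this, negT]
        push_cast; rfl
      have hbc' : ((-a : ℤ) : ℝ) < -c := by push_cast; linarith
      have hca' : -c < ((-b : ℤ) : ℝ) := by push_cast; linarith
      have hc1' : (fun x : ℝ => - f^[e] (-x)) (-c) = -c := by simp [hc1]
      rcases hcase with rfl | ⟨h1, h2, h3⟩ | ⟨h1, h2, h3, h4 | h4⟩
      · exact core_one hcen hh c
      · exact core_neg (core_even hcen.neg hsp hh' hbc' hca' hc1' (by omega) h2)
      · exact core_neg (core_even hcen.neg hsp hh' hbc' hca' hc1' h3 h4)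
      · exact core_neg (core_long hcyc.neg hcen.neg hsp hh' hbc' hca' hc1' h2 h4)
  · by_cases hq1 : q = 1
    · refine glue hf hfo he hl hS hT hc3 hq ?_
      subst hq1
      exact core_one hcen hh c
    push Not at hns
    have hlt := hcen.lt
    have hmem : ∀ n, o (e*n) ∈ S := fun n => (hS _).2 ⟨n, rfl⟩
    have hsw : ∀ n, o (e*(n+1)) ≤ b ↔ ¬ o (e*n) ≤ b := by
      intro n
      have h1 := hns _ (hmem n)
      simp only [NL, NR, hT1] at h1
      have h2 := hcen.side _ (hmem n)
      have h3 := hcen.side _ (hmem (n+1))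
      constructor
      · intro h h'; exact h1.1 ⟨h', h⟩
      · intro h
        rcases h3 with h3 | h3
        · exact h3
        · exact absurd ⟨h2.resolve_left h, h3⟩ h1.2
    have hpar : ∀ n, (o (e*(2*n)) ≤ b ↔ o (e*0) ≤ b) := by
      intro n
      induction n with
      | zero => simp
      | succ n ih => rw [show 2*(n+1) = 2*n+1+1 by ring, hsw, hsw, not_not, ih]
    have hpar' : ∀ n, (o (e*(2*n+1)) ≤ b ↔ ¬ o (e*0) ≤ b) := by
      intro n; rw [hsw, hpar]
    have hr2 : r % 2 = 0 := by
      by_contra hodd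
      have h1 := hpar' (r/2)
      rw [show 2*(r/2)+1 = r by omega, (hκ r 0).2 (by simp [Nat.ModEq])] at h1
      tauto
    rcases hcase with h | ⟨h1, h2, h3⟩ | ⟨h1, h2⟩
    · exact absurd h hq1
    · have hlev : Level o (2*e) := by
        intro d hd1 hd2
        rcases lt_trichotomy d e with h | h | h
        · rcases hl d hd1 h with h' | h'
          · left; intro j j'
            have := h' (2*j) (2*j')
            rwa [show e * (2*j) = 2*e*j by ring, show e * (2*j') = 2*e*j' by ring] at this
          · right; intro j j'
            have := h' (2*j) (2*j')
            rwa [show e * (2*j) = 2*e*j by ring, show e * (2*j') = 2*e*j' by ring] at this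
        · subst h
          have e1 : ∀ j, 2*d*j = d*(2*j) := fun j => by ring
          have e2 : ∀ j, d*(2*j)+d = d*(2*j+1) := fun j => by ring
          simp only [e1, e2]
          by_cases h0 : o (d*0) ≤ b
          · left; intro j j'
            have h1 := (hpar j).2 h0
            have h2 := (hpar' j').not.2 (by simpa using h0)
            omega
          · right; intro j j'
            have h1 := (hpar j).not.2 h0
            have h2 := (hpar' j').2 h0
            omega
        · have e3 : ∀ j', 2*e*j' + d = e*(2*j'+1) + (d-e) := by
            intro j'
            have : e*(2*j'+1) = 2*e*j' + e := by ring
            omega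
          rcases hl (d-e) (by omega) (by omega) with h' | h'
          · left; intro j j'
            have := h' (2*j) (2*j'+1)
            rw [e3]
            rwa [show e * (2*j) = 2*e*j by ring] at this
          · right; intro j j'
            have := h' (2*j) (2*j'+1)
            rw [e3]
            rwa [show e * (2*j) = 2*e*j by ring] at this
      have := ih (r/2) (by omega) (2*e) (q/2) (by omega) (by
        rw [hp, show 2*e*(r/2) = e*(2*(r/2)) by ring, show 2*(r/2) = r by omega]) hlev h3
      rwa [show 2*e*(q/2) = e*(2*(q/2)) by ring, show 2*(q/2) = q by omega] at this
    · omega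


lemma pl_exists (t : ℕ → ℕ) (n : ℕ) : ∃ f : ℝ → ℝ, Continuous f ∧ (∀ k ≤ n, f k = t k) ∧
    ∀ k < n, ∀ x : ℝ, (k:ℝ) ≤ x → x ≤ k + 1 → f x ∈ uIcc (t k : ℝ) (t (k+1)) := by
  induction n with
  | zero =>
    refine ⟨fun _ => t 0, continuous_const, ?_, by simp⟩
    intro k hk
    obtain rfl : k = 0 := by omega
    rfl
  | succ n ih =>
    obtain ⟨f, hf, hk, hi⟩ := ih
    set g : ℝ → ℝ := fun x => f (min x n) + ((t (n+1) : ℝ) - t n) * max 0 (min 1 (x - n)) with hg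
    have h1 : ∀ x : ℝ, x ≤ n → g x = f x := by
      intro x hx
      simp only [hg]
      rw [min_eq_left hx, max_eq_left (le_trans (min_le_right _ _) (by linarith))]
      ring
    have h2 : ∀ x : ℝ, (n:ℝ) ≤ x → x ≤ n + 1 → g x = t n + ((t (n+1) : ℝ) - t n) * (x - n) := by
      intro x hx hx'
      simp only [hg]
      rw [min_eq_right hx, min_eq_right (by linarith), max_eq_right (by linarith), hk n le_rfl]
    refine ⟨g, by fun_prop, ?_, ?_⟩
    · intro k hkn
      rcases Nat.lt_or_ge n k with h | h
      · obtain rfl : k = n + 1 := by omega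
        rw [h2 _ (by push_cast; linarith) (by push_cast; linarith)]
        push_cast; ring
      · rw [h1 _ (by exact_mod_cast h), hk k h]
    · intro k hkn x hx hx'
      rcases Nat.lt_or_ge k n with h | h
      · rw [h1]
        · exact hi k h x hx hx'
        · have : (k:ℝ) + 1 ≤ n := by exact_mod_cast h
          linarith
      · obtain rfl : k = n := by omega
        rw [h2 _ hx hx', mem_uIcc]
        rcases le_total (t k : ℝ) (t (k+1)) with h | h
        · left; constructor <;> nlinarith
        · right; constructor <;> nlinarith

lemma per_modEq {α : Type*} {A : ℕ → α} {n : ℕ} (h : ∀ i, A (i+n) = A i) {i j : ℕ} (hij : i ≡ j [MOD n]) :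
    A i = A j := by
  rw [← per_mod h i, ← per_mod h j, hij]

theorem comb {t : ℕ → ℕ} {p q : ℕ} (ht : ∀ k < p, t k < p)
    (hc : ∀ i j, t^[i] 0 = t^[j] 0 ↔ i ≡ j [MOD p]) (hs : ∀ k < p, ∃ j, t^[j] 0 = k)
    (h : SharkGT p q) : ∃ u : ℕ → ℕ, (∀ i, u i + 1 < p) ∧ (∀ i, u (i+q) = u i) ∧
    (∀ i, (t (u i) ≤ u (i+1) ∧ u (i+1) + 1 ≤ t (u i + 1)) ∨
      (t (u i + 1) ≤ u (i+1) ∧ u (i+1) + 1 ≤ t (u i))) ∧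
    (∀ i j, ¬ i ≡ j [MOD q] → ∃ n, u (i+n) ≠ u (j+n)) ∧
    (∀ i j, ¬ i ≡ j [MOD q] → ∀ k < p, ¬ ∀ n, (t^[n] k = u (i+n) ∨ t^[n] k = u (i+n) + 1) ∧
      (t^[n] k = u (j+n) ∨ t^[n] k = u (j+n) + 1)) := by
  obtain ⟨hp2, hq1, -⟩ := shark_cases h
  have hne := shark_ne p q h
  obtain ⟨f, hf, hfk, hfi⟩ := pl_exists t (p-1)
  have hlt : ∀ j, t^[j] 0 < p := by
    intro j
    induction j with
    | zero => simp; omega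
    | succ j ih => rw [Function.iterate_succ_apply']; exact ht _ ih
  set o : ℕ → ℤ := fun j => ((t^[j] 0 : ℕ) : ℤ) with ho
  have hfo : ∀ j, f (o j) = o (j+1) := by
    intro j
    simp only [ho]
    rw [Function.iterate_succ_apply']
    have := hfk (t^[j] 0) (by have := hlt j; omega)
    push_cast
    exact this
  obtain ⟨x, hx, hxb, hxd⟩ := main1D hf hfo (p := p) (by intro i j; simp only [ho]; rw [← hc]; norm_cast)
    p 1 q one_pos (by simp) (by intro d h1 h2; omega) h
  rw [one_mul] at hx hxd
  have hxp : ∀ i, f^[i+q] x = f^[i] x := by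
    intro i; rw [Function.iterate_add_apply, hx]
  have hmul : ∀ i n, i + (n + i*(q-1)) ≡ n [MOD q] := by
    intro i n
    have : i + (n + i*(q-1)) = n + q * i := by
      obtain ⟨q', rfl⟩ : ∃ q', q = q' + 1 := ⟨q-1, by omega⟩
      simp; ring
    rw [this]
    simp [Nat.ModEq]
  have hxm : ∀ {i j}, i ≡ j [MOD q] → f^[i] x = f^[j] x := fun h => per_modEq (A := fun i => f^[i] x) hxp h
  have hob : ∀ s, 0 ≤ o s ∧ o s < p := fun s => ⟨by simp [ho], by simp only [ho]; exact_mod_cast hlt s⟩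
  have hb : ∀ i, 0 ≤ f^[i] x ∧ f^[i] x ≤ (p:ℝ) - 1 := by
    intro i
    obtain ⟨⟨s, h1⟩, s', h2⟩ := hxb i
    have h3 : (0:ℝ) ≤ o s := by exact_mod_cast (hob s).1
    have h4 : (o s' : ℝ) + 1 ≤ p := by exact_mod_cast (hob s').2
    constructor <;> linarith
  have hni : ∀ i (m : ℕ), f^[i] x ≠ m := by
    intro i m hm
    have hmp : m < p := by
      have := (hb i).2
      rw [hm] at this
      have : (m:ℝ) < p := by linarith
      exact_mod_cast this
    obtain ⟨s, hs⟩ := hs m hmp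
    have hos : f^[i] x = o s := by rw [hm]; simp only [ho, hs]; norm_cast
    have hxo : ∀ n, f^[i+n] x = o (s+n) := by
      intro n
      rw [add_comm i n, Function.iterate_add_apply, hos, orb_iter hfo]
    have hpq : p < q := by
      have h1 := hxo q
      rw [hxp, hos] at h1
      have h2 : t^[s] 0 = t^[s+q] 0 := by
        have : o s = o (s+q) := by exact_mod_cast h1
        simpa [ho] using this
      rw [hc] at h2
      have h3 : p ∣ q := by
        have := (Nat.modEq_iff_dvd' (by omega)).1 h2
        simpa using this
      have := Nat.le_of_dvd (by omega) h3
      omega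
    obtain ⟨-, h2⟩ := hxd p (by omega) hpq
    apply h2 (s + i*(q-1))
    intro n
    have h3 : f^[n] x = o (s + i*(q-1) + n) := by
      rw [← hxm (hmul i n), hxo]
      congr 2; ring
    have h4 : f^[n+p] x = o (s + i*(q-1) + n) := by
      rw [← hxm (hmul i (n+p)), hxo]
      simp only [ho]
      norm_cast
      rw [hc]
      have : s + (n + p + i*(q-1)) = s + i*(q-1) + n + p := by ring
      rw [this]; simp [Nat.ModEq]
    rw [h3, h4]; simp
  set u : ℕ → ℕ := fun i => ⌊f^[i] x⌋₊ with hu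
  have hul : ∀ i, (u i : ℝ) < f^[i] x := fun i =>
    lt_of_le_of_ne (Nat.floor_le (hb i).1) (fun e => hni i _ e.symm)
  have hur : ∀ i, f^[i] x < u i + 1 := fun i => Nat.lt_floor_add_one _
  have hup : ∀ i, u (i+q) = u i := by intro i; simp only [hu]; rw [hxp]
  have hu1 : ∀ i, u i + 1 < p := by
    intro i
    have h1 := hul i
    have h2 := (hb i).2
    have : ((u i + 1 : ℕ) : ℝ) < p := by push_cast; linarith
    exact_mod_cast this
  have hum : ∀ {i j}, i ≡ j [MOD q] → u i = u j := fun h => per_modEq hup h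
  have hd : ∀ i j, ¬ i ≡ j [MOD q] → ∃ d, 0 < d ∧ d < q ∧ ∀ n, u (j+n) = u (i+d+n) := by
    intro i j hij
    refine ⟨(j + i*(q-1)) % q, ?_, Nat.mod_lt _ (by omega), ?_⟩
    · apply Nat.pos_of_ne_zero
      intro e
      apply hij
      have h1 := hmul i j
      have h2 : j + i*(q-1) ≡ 0 [MOD q] := by simpa [Nat.ModEq] using e
      simpa using (h2.add_left i).symm.trans h1
    · intro n
      apply hum
      have h1 := hmul i j
      have h2 : (j + i*(q-1)) % q ≡ j + i*(q-1) [MOD q] := Nat.mod_modEq _ _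
      exact (((h2.add_left i).trans h1).add_right n).symm
  refine ⟨u, hu1, hup, ?_, ?_, ?_⟩
  · intro i
    have h1 := hfi (u i) (by have := hu1 i; omega) (f^[i] x) (hul i).le (hur i).le
    have h2 := hul (i+1)
    have h3 := hur (i+1)
    rw [Function.iterate_succ_apply'] at h2 h3
    rcases mem_uIcc.1 h1 with ⟨h4, h5⟩ | ⟨h4, h5⟩
    · left
      have h6 : (t (u i) : ℝ) < ((u (i+1) + 1 : ℕ) : ℝ) := by push_cast; linarith
      have h7 : (u (i+1) : ℝ) < t (u i + 1) := by linarith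
      have h8 : t (u i) < u (i+1) + 1 := by exact_mod_cast h6
      have h9 : u (i+1) < t (u i + 1) := by exact_mod_cast h7
      omega
    · right
      have h6 : (t (u i + 1) : ℝ) < ((u (i+1) + 1 : ℕ) : ℝ) := by push_cast; linarith
      have h7 : (u (i+1) : ℝ) < t (u i) := by linarith
      have h8 : t (u i + 1) < u (i+1) + 1 := by exact_mod_cast h6
      have h9 : u (i+1) < t (u i) := by exact_mod_cast h7
      omega
  · intro i j hij
    obtain ⟨d, hd0, hdq, hd⟩ := hd i j hij
    obtain ⟨⟨a, s, h1⟩, -⟩ := hxd d hd0 hdq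
    refine ⟨a + i*(q-1), ?_⟩
    rw [hd, hum (hmul i a)]
    have e : i + d + (a + i*(q-1)) = i + ((a+d) + i*(q-1)) := by ring
    rw [e, hum (hmul i (a+d))]
    intro he
    have h2 := hul a; have h3 := hur a; have h4 := hul (a+d); have h5 := hur (a+d)
    rw [← he] at h4 h5
    have h6 : (u a : ℝ) < o s ∧ (o s : ℝ) < u a + 1 := by
      rcases mem_uIcc.1 h1 with ⟨h6, h7⟩ | ⟨h6, h7⟩ <;> constructor <;> linarith
    have h7 : (u a : ℤ) < o s := by exact_mod_cast h6.1
    have h8 : o s < (u a : ℤ) + 1 := by exact_mod_cast h6.2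
    omega
  · intro i j hij k hk hall
    obtain ⟨d, hd0, hdq, hd⟩ := hd i j hij
    obtain ⟨-, h1⟩ := hxd d hd0 hdq
    obtain ⟨s, hs⟩ := hs k hk
    apply h1 (s + i*(q-1))
    intro n
    have h2 := hall (n + i*(q-1))
    have e : i + d + (n + i*(q-1)) = i + ((n+d) + i*(q-1)) := by ring
    rw [hd, e, hum (hmul i n), hum (hmul i (n+d)), ← hs, ← Function.iterate_add_apply] at h2
    have e' : (n + i*(q-1) + s) = s + i*(q-1) + n := by ring
    rw [e'] at h2
    have e2 : (o (s + i*(q-1) + n) : ℝ) = ((t^[s + i*(q-1) + n] 0 : ℕ) : ℝ) := by simp only [ho]; norm_cast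
    rw [e2]
    have a1 := hul n; have a2 := hur n; have a3 := hul (n+d); have a4 := hur (n+d)
    obtain ⟨h3, h4⟩ := h2
    constructor
    · rw [abs_lt]
      rcases h3 with h3 | h3 <;> rw [h3] <;> push_cast <;> constructor <;> linarith
    · rw [abs_lt]
      rcases h4 with h3 | h3 <;> rw [h3] <;> push_cast <;> constructor <;> linarith


theorem fiberwise {X : Type*} [TopologicalSpace X] [MeasurableSpace X] [BorelSpace X]
    [SecondCountableTopology X] {R : X → X} (hR : Measurable R) {g : X → ℝ → ℝ}
    (hg : Continuous (Function.uncurry g)) {m M : ℕ → X → ℝ} (hm : ∀ k, Measurable (m k))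
    (hM : ∀ k, Measurable (M k)) {p q : ℕ} {t : ℕ → ℕ} (ht : ∀ k < p, t k < p)
    (hc : ∀ i j, t^[i] 0 = t^[j] 0 ↔ i ≡ j [MOD p]) (hs : ∀ k < p, ∃ j, t^[j] 0 = k)
    (h : SharkGT p q) (hmM : ∀ k < p, ∀ θ, m k θ ≤ M k θ)
    (hlt : ∀ k l, k < l → l < p → ∀ θ, M k θ < m l θ)
    (hmap : ∀ k < p, ∀ θ, ∀ x ∈ Icc (m k θ) (M k θ), g θ x ∈ Icc (m (t k) (R θ)) (M (t k) (R θ))) :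
    ∃ α β : ℕ → X → ℝ, (∀ i, Measurable (α i)) ∧ (∀ i, Measurable (β i)) ∧
      (∀ i, α (i+q) = α i) ∧ (∀ i, β (i+q) = β i) ∧
      (∀ i θ, m 0 θ ≤ α i θ ∧ α i θ ≤ β i θ ∧ β i θ ≤ M (p-1) θ) ∧
      (∀ i θ, g θ '' Icc (α i θ) (β i θ) = Icc (α (i+1) (R θ)) (β (i+1) (R θ))) ∧
      ∀ i j, ¬ i ≡ j [MOD q] → (∀ θ, β i θ < α j θ) ∨ (∀ θ, β j θ < α i θ) := by
  obtain ⟨hp2, hq1, -⟩ := shark_cases h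
  obtain ⟨u, hu1, hup, harr, hD, hT⟩ := comb ht hc hs h
  have hMle : ∀ k l, k ≤ l → l < p → ∀ θ, M k θ ≤ M l θ := by
    intro k l hkl hl θ
    rcases hkl.eq_or_lt with rfl | hkl
    · rfl
    · exact (hlt k l hkl hl θ).le.trans (hmM l hl θ)
  have hmle : ∀ k l, k ≤ l → l < p → ∀ θ, m k θ ≤ m l θ := by
    intro k l hkl hl θ
    rcases hkl.eq_or_lt with rfl | hkl
    · rfl
    · exact (hmM k (by omega) θ).trans (hlt k l hkl hl θ).le
  obtain ⟨α, β, h1, h2, h3, h4, h5, h6, h7⟩ := loop_thm (X := X) hR hg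
    (s := fun k => decide (t k ≤ t (k+1))) (J := fun k θ => (M k θ, m (k+1) θ)) (u := u) q hq1 hup
    (by
      refine ⟨fun i => (hM _).prodMk (hm _), fun i θ => (hlt _ _ (Nat.lt_succ_self _) (hu1 i) θ).le, ?_, ?_⟩
      · intro i θ
        have a1 := hmap (u i) (by have := hu1 i; omega) θ (M (u i) θ)
          ⟨hmM _ (by have := hu1 i; omega) θ, le_rfl⟩
        have b0 := ht (u i) (by have := hu1 i; omega)
        have b1 := ht (u i + 1) (hu1 i)
        have b2 := hu1 (i+1)
        rcases harr i with ⟨h1, h2⟩ | ⟨h1, h2⟩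
        · have : decide (t (u i) ≤ t (u i + 1)) = true := by simp; omega
          simp only [this, slo, sgn, if_true]
          exact a1.2.trans (hMle _ _ h1 (by omega) _)
        · have : decide (t (u i) ≤ t (u i + 1)) = false := by simp; omega
          simp only [this, slo, sgn]
          have := (hmle _ _ h2 b0 (R θ)).trans a1.1
          simpa using this
      · intro i θ
        have a1 := hmap (u i + 1) (hu1 i) θ (m (u i + 1) θ)
          ⟨le_rfl, hmM _ (hu1 i) θ⟩
        have b0 := ht (u i) (by have := hu1 i; omega)
        have b1 := ht (u i + 1) (hu1 i)
        have b2 := hu1 (i+1)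
        rcases harr i with ⟨h1, h2⟩ | ⟨h1, h2⟩
        · have : decide (t (u i) ≤ t (u i + 1)) = true := by simp; omega
          simp only [this, shi, sgn, if_true]
          exact (hmle _ _ h2 b1 (R θ)).trans a1.1
        · have : decide (t (u i) ≤ t (u i + 1)) = false := by simp; omega
          simp only [this, shi, sgn]
          have := a1.2.trans (hMle _ _ h1 (by omega) (R θ))
          simpa using this)
    (by
      intro i j hij θ
      exact (hmM _ (hu1 i) θ).trans (hMle _ _ hij (by have := hu1 j; omega) θ))
  have hno : ∀ i j, ¬ i ≡ j [MOD q] → ∀ θ z, z ∈ Icc (α i θ) (β i θ) → z ∈ Icc (α j θ) (β j θ) → False := by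
    intro i j hij θ z hzi hzj
    have step : ∀ i θ z, z ∈ Icc (α i θ) (β i θ) → g θ z ∈ Icc (α (i+1) (R θ)) (β (i+1) (R θ)) := by
      intro i θ z hz
      rw [← h6]; exact mem_image_of_mem _ hz
    have e1 : ∀ N, ∃ θ z, z ∈ Icc (α (i+N) θ) (β (i+N) θ) ∧ z ∈ Icc (α (j+N) θ) (β (j+N) θ) := by
      intro N
      induction N with
      | zero => exact ⟨θ, z, hzi, hzj⟩
      | succ N ih =>
        obtain ⟨θ, z, a, b⟩ := ih
        exact ⟨R θ, g θ z, step _ _ _ a, step _ _ _ b⟩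
    have hK : ∀ i θ z, z ∈ Icc (α i θ) (β i θ) → M (u i) θ ≤ z ∧ z ≤ m (u i + 1) θ := by
      intro i θ z hz
      exact ⟨(h5 i θ).1.trans hz.1, hz.2.trans (h5 i θ).2.2⟩
    obtain ⟨N, hN⟩ := hD i j hij
    obtain ⟨θ, z, ha, hb⟩ := e1 N
    obtain ⟨k, hk, hkz⟩ : ∃ k < p, z ∈ Icc (m k θ) (M k θ) := by
      obtain ⟨a1, a2⟩ := hK _ _ _ ha
      obtain ⟨b1, b2⟩ := hK _ _ _ hb
      rcases Nat.lt_or_gt_of_ne hN with h | h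
      · refine ⟨u (j+N), by have := hu1 (j+N); omega, ?_, ?_⟩
        · exact (hmM _ (by have := hu1 (j+N); omega) _).trans b1
        · exact a2.trans ((hmM _ (hu1 (i+N)) θ).trans (hMle _ _ h (by have := hu1 (j+N); omega) θ))
      · refine ⟨u (i+N), by have := hu1 (i+N); omega, ?_, ?_⟩
        · exact (hmM _ (by have := hu1 (i+N); omega) _).trans a1
        · exact b2.trans ((hmM _ (hu1 (j+N)) θ).trans (hMle _ _ h (by have := hu1 (i+N); omega) θ))
    have e2 : ∀ n, t^[n] k < p ∧ ∃ θ z, z ∈ Icc (α (i+N+n) θ) (β (i+N+n) θ) ∧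
        z ∈ Icc (α (j+N+n) θ) (β (j+N+n) θ) ∧ z ∈ Icc (m (t^[n] k) θ) (M (t^[n] k) θ) := by
      intro n
      induction n with
      | zero => exact ⟨hk, θ, z, ha, hb, hkz⟩
      | succ n ih =>
        obtain ⟨hl, θ, z, a, b, c⟩ := ih
        rw [Function.iterate_succ_apply']
        exact ⟨ht _ hl, R θ, g θ z, step _ _ _ a, step _ _ _ b, hmap _ hl _ _ c⟩
    have e3 : ∀ i θ z l, l < p → z ∈ Icc (α i θ) (β i θ) → z ∈ Icc (m l θ) (M l θ) → l = u i ∨ l = u i + 1 := by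
      intro i θ z l hl hz hz'
      obtain ⟨a1, a2⟩ := hK _ _ _ hz
      by_contra hcon
      push Not at hcon
      rcases Nat.lt_or_ge l (u i) with h | h
      · have := hlt _ _ h (by have := hu1 i; omega) θ
        have := hmM (u i) (by have := hu1 i; omega) θ
        linarith [hz'.2]
      · have h1 := hlt (u i + 1) l (by omega) hl θ
        have := hmM (u i + 1) (hu1 i) θ
        linarith [hz'.1]
    refine hT (i+N) (j+N) (fun e => hij (Nat.ModEq.add_right_cancel' N e)) k hk ?_
    intro n
    obtain ⟨hl, θ, z, a, b, c⟩ := e2 n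
    exact ⟨e3 _ _ _ _ hl a c, e3 _ _ _ _ hl b c⟩
  refine ⟨α, β, h1, h2, h3, h4, ?_, h6, ?_⟩
  · intro i θ
    obtain ⟨a, b, c⟩ := h5 i θ
    have hu := hu1 i
    refine ⟨le_trans (le_trans (hmM 0 (by omega) θ) (hMle 0 _ (Nat.zero_le _) (by omega) θ)) a, b, c.trans ?_⟩
    exact (hmM _ hu θ).trans (hMle _ _ (by omega) (by omega) θ)
  · intro i j hij
    have a1 : ∀ i θ, α i θ ≤ β i θ := fun i θ => (h5 i θ).2.1
    rcases h7 i j (hD i j hij) with h | h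
    · left
      intro θ
      refine lt_of_le_of_ne (h θ) fun e => hno i j hij θ (β i θ) ⟨a1 _ _, le_rfl⟩ ⟨e.ge, e.le.trans (a1 _ _)⟩
    · right
      intro θ
      refine lt_of_le_of_ne (h θ) fun e => hno i j hij θ (β j θ) ⟨e.ge, e.le.trans (a1 _ _)⟩ ⟨a1 _ _, le_rfl⟩


lemma fib_eq {A : Set Cyl} {θ : S1} {a b : II} (hab : a ≤ b) (h : fiber A θ = Icc a b) :
    mA A θ = a ∧ MA A θ = b := by
  constructor
  · refine IsLeast.csInf_eq ⟨⟨a, by rw [h]; exact ⟨le_rfl, hab⟩, rfl⟩, ?_⟩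
    rintro _ ⟨x, hx, rfl⟩
    rw [h] at hx
    exact hx.1
  · refine IsGreatest.csSup_eq ⟨⟨b, by rw [h]; exact ⟨hab, le_rfl⟩, rfl⟩, ?_⟩
    rintro _ ⟨x, hx, rfl⟩
    rw [h] at hx
    exact hx.2

lemma fib_compact {A : Set Cyl} (hA : IsClosed A) (θ : S1) : IsCompact (Subtype.val '' fiber A θ) := by
  have : IsClosed (fiber A θ) := hA.preimage (by fun_prop : Continuous fun x : II => (θ, x))
  exact this.isCompact.image continuous_subtype_val

lemma mA_spec {A : Set Cyl} (hA : IsClosed A) {θ : S1} (h : ∃ x, (θ, x) ∈ A) :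
    (∃ x : II, (θ, x) ∈ A ∧ (x:ℝ) = mA A θ) ∧ (∃ x : II, (θ, x) ∈ A ∧ (x:ℝ) = MA A θ) ∧
    ∀ x : II, (θ, x) ∈ A → mA A θ ≤ x ∧ (x:ℝ) ≤ MA A θ := by
  have hc := fib_compact hA θ
  have hne : (Subtype.val '' fiber A θ).Nonempty := by
    obtain ⟨x, hx⟩ := h
    exact ⟨_, x, hx, rfl⟩
  refine ⟨?_, ?_, ?_⟩
  · obtain ⟨x, hx, e⟩ := hc.sInf_mem hne
    exact ⟨x, hx, e⟩
  · obtain ⟨x, hx, e⟩ := hc.sSup_mem hne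
    exact ⟨x, hx, e⟩
  · intro x hx
    exact ⟨csInf_le hc.bddBelow ⟨x, hx, rfl⟩, le_csSup hc.bddAbove ⟨x, hx, rfl⟩⟩

lemma mA_meas {A : Set Cyl} (hA : IsClosed A) (h : ∀ θ, ∃ x, (θ, x) ∈ A) : Measurable (mA A) := by
  refine measurable_of_Iic fun c => ?_
  have : mA A ⁻¹' Iic c = Prod.fst '' (A ∩ {z : Cyl | (z.2 : ℝ) ≤ c}) := by
    ext θ
    obtain ⟨⟨x, hx, e⟩, -, h3⟩ := mA_spec hA (h θ)
    constructor
    · intro hc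
      exact ⟨(θ, x), ⟨hx, by simpa [e] using hc⟩, rfl⟩
    · rintro ⟨⟨θ', y⟩, ⟨hy, hc⟩, rfl⟩
      exact (h3 y hy).1.trans hc
  rw [this]
  have hcl : IsClosed (A ∩ {z : Cyl | (z.2 : ℝ) ≤ c}) :=
    hA.inter (isClosed_le (by fun_prop) continuous_const)
  exact (hcl.isCompact.image continuous_fst).isClosed.measurableSet

lemma MA_meas {A : Set Cyl} (hA : IsClosed A) (h : ∀ θ, ∃ x, (θ, x) ∈ A) : Measurable (MA A) := by
  refine measurable_of_Ici fun c => ?_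
  have : MA A ⁻¹' Ici c = Prod.fst '' (A ∩ {z : Cyl | c ≤ (z.2 : ℝ)}) := by
    ext θ
    obtain ⟨-, ⟨x, hx, e⟩, h3⟩ := mA_spec hA (h θ)
    constructor
    · intro hc
      exact ⟨(θ, x), ⟨hx, by simpa [e] using hc⟩, rfl⟩
    · rintro ⟨⟨θ', y⟩, ⟨hy, hc⟩, rfl⟩
      exact le_trans hc (h3 y hy).2
  rw [this]
  have hcl : IsClosed (A ∩ {z : Cyl | c ≤ (z.2 : ℝ)}) :=
    hA.inter (isClosed_le continuous_const (by fun_prop))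
  exact (hcl.isCompact.image continuous_fst).isClosed.measurableSet

lemma inv_resid {G : Set S1} (hG : G ∈ residual S1) (w : S1) : ∃ H ⊆ G, H ∈ residual S1 ∧
    MeasurableSet H ∧ ∀ θ, θ ∈ H ↔ θ + w ∈ H := by
  obtain ⟨H, hHG, hH, hd⟩ := mem_residual.1 hG
  have hHr : H ∈ residual S1 := mem_residual.2 ⟨H, subset_rfl, hH, hd⟩
  refine ⟨⋂ n : ℤ, (fun θ => θ + n • w) ⁻¹' H, ?_, ?_, ?_, ?_⟩
  · intro θ hθ
    have := mem_iInter.1 hθ 0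
    apply hHG
    simpa using this
  · refine countable_iInter_mem.2 fun n => ?_
    exact tendsto_residual_of_isOpenMap (continuous_add_right _) (isOpenMap_add_right (n • w)) hHr
  · exact MeasurableSet.iInter fun n => (continuous_add_right _).measurable hH.measurableSet
  · intro θ
    simp only [mem_iInter, mem_preimage]
    constructor
    · intro h n
      have := h (1 + n)
      rwa [add_smul, one_smul, ← add_assoc] at this
    · intro h n
      have := h (n - 1)
      rwa [add_assoc, sub_smul, one_smul, add_sub_cancel] at this

lemma closed_inv_univ {ω : ℝ} (hω : Irrational ω) {Z : Set S1} (hZ : IsClosed Z) (hne : Z.Nonempty)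
    (hi : ∀ θ ∈ Z, θ + (ω : S1) ∈ Z) : Z = univ := by
  obtain ⟨z, hz⟩ := hne
  have hd : DenseRange (fun n : ℕ => n • (ω : S1)) := by
    rw [← denseRange_zsmul_iff_nsmul]
    exact AddCircle.denseRange_zsmul_coe_iff.2 (by simpa using hω)
  have hd2 : DenseRange (fun n : ℕ => z + n • (ω : S1)) :=
    (Homeomorph.addLeft z).surjective.denseRange.comp hd (Homeomorph.addLeft z).continuous
  have hsub : range (fun n : ℕ => z + n • (ω : S1)) ⊆ Z := by
    rintro _ ⟨n, rfl⟩
    induction n with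
    | zero => simpa using hz
    | succ n ih =>
      have := hi _ ih
      simpa [add_smul, add_assoc] using this
  exact eq_univ_of_univ_subset (hd2.closure_range ▸ hZ.closure_subset_iff.2 hsub)


theorem strips_of {F : Cyl → Cyl} (hF : Continuous F) {ω : ℝ} (hω : Irrational ω)
    (hFω : ∀ z : Cyl, (F z).1 = z.1 + (ω : S1)) {G : Set S1} (hG : G ∈ residual S1)
    (hinv : ∀ θ, θ ∈ G ↔ θ + (ω : S1) ∈ G) {q : ℕ} (hq : 0 < q) {α β : ℕ → S1 → ℝ}
    (hα : ∀ i, ContinuousOn (α i) G) (hβ : ∀ i, ContinuousOn (β i) G)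
    (hαp : ∀ i, ∀ θ ∈ G, α (i+q) θ = α i θ) (hβp : ∀ i, ∀ θ ∈ G, β (i+q) θ = β i θ)
    (hle : ∀ i, ∀ θ ∈ G, 0 ≤ α i θ ∧ α i θ ≤ β i θ ∧ β i θ ≤ 1)
    (him : ∀ i, ∀ θ ∈ G, ∀ y : II, (α (i+1) (θ + (ω : S1)) ≤ y ∧ (y:ℝ) ≤ β (i+1) (θ + (ω : S1))) ↔
      ∃ x : II, (α i θ ≤ x ∧ (x:ℝ) ≤ β i θ) ∧ (F (θ, x)).2 = y)
    (hord : ∀ i j, ¬ i ≡ j [MOD q] → (∀ θ ∈ G, β i θ < α j θ) ∨ (∀ θ ∈ G, β j θ < α i θ)) :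
    ∃ C : Set Cyl, IsPeriodicStripOrbit F q C := by
  set E : ℕ → Set Cyl := fun i => {z | z.1 ∈ G ∧ α i z.1 ≤ z.2 ∧ (z.2 : ℝ) ≤ β i z.1} with hE
  set C : ℕ → Set Cyl := fun i => closure (E i) with hC
  have hGd : Dense G := dense_of_mem_residual hG
  have hCc : ∀ i, IsClosed (C i) := fun i => isClosed_closure
  have hfib : ∀ i, ∀ θ ∈ G, ∀ x : II, (θ, x) ∈ C i ↔ α i θ ≤ x ∧ (x:ℝ) ≤ β i θ := by
    intro i θ hθ x
    constructor
    · intro hx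
      have : (nhdsWithin ((θ, x) : Cyl) (E i)).NeBot := mem_closure_iff_nhdsWithin_neBot.1 hx
      have t0 : Filter.Tendsto (fun z : Cyl => z.1) (nhdsWithin (θ, x) (E i)) (nhdsWithin θ G) := by
        refine tendsto_nhdsWithin_iff.2 ⟨?_, ?_⟩
        · exact (continuous_fst.tendsto (θ, x)).mono_left nhdsWithin_le_nhds
        · filter_upwards [self_mem_nhdsWithin] with z hz using hz.1
      have t1 : Filter.Tendsto (fun z : Cyl => (z.2 : ℝ)) (nhdsWithin (θ, x) (E i)) (nhds (x:ℝ)) :=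
        ((continuous_subtype_val.comp continuous_snd).tendsto ((θ, x) : Cyl)).mono_left nhdsWithin_le_nhds
      have t2 : Filter.Tendsto (fun z : Cyl => α i z.1) (nhdsWithin (θ, x) (E i)) (nhds (α i θ)) :=
        ((hα i) θ hθ).tendsto.comp t0
      have t3 : Filter.Tendsto (fun z : Cyl => β i z.1) (nhdsWithin (θ, x) (E i)) (nhds (β i θ)) :=
        ((hβ i) θ hθ).tendsto.comp t0
      constructor
      · refine le_of_tendsto_of_tendsto t2 t1 ?_
        filter_upwards [self_mem_nhdsWithin] with z hz using hz.2.1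
      · refine le_of_tendsto_of_tendsto t1 t3 ?_
        filter_upwards [self_mem_nhdsWithin] with z hz using hz.2.2
    · intro hx
      exact subset_closure ⟨hθ, hx⟩
  have hfibI : ∀ i, ∀ θ ∈ G, ∃ a b : II, a ≤ b ∧ fiber (C i) θ = Icc a b ∧ (a:ℝ) = α i θ ∧ (b:ℝ) = β i θ := by
    intro i θ hθ
    obtain ⟨h1, h2, h3⟩ := hle i θ hθ
    refine ⟨⟨α i θ, h1, h2.trans h3⟩, ⟨β i θ, h1.trans h2, h3⟩, h2, ?_, rfl, rfl⟩
    ext x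
    exact hfib i θ hθ x
  have hproj : ∀ i, ∀ θ, ∃ x : II, (θ, x) ∈ C i := by
    intro i
    have hcl : IsClosed (Prod.fst '' C i) := ((hCc i).isCompact.image continuous_fst).isClosed
    have hsub : G ⊆ Prod.fst '' C i := by
      intro θ hθ
      obtain ⟨h1, h2, h3⟩ := hle i θ hθ
      exact ⟨(θ, ⟨α i θ, h1, h2.trans h3⟩), (hfib i θ hθ _).2 ⟨le_rfl, h2⟩, rfl⟩
    intro θ
    have : θ ∈ Prod.fst '' C i := hcl.closure_subset_iff.2 hsub (hGd θ)
    obtain ⟨⟨θ', x⟩, hx, rfl⟩ := this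
    exact ⟨x, hx⟩
  have himE : ∀ i, F '' E i = E (i+1) := by
    intro i
    ext ⟨θ', y⟩
    constructor
    · rintro ⟨⟨θ, x⟩, ⟨h1, h2⟩, e⟩
      have e1 : θ' = θ + (ω : S1) := by have := hFω (θ, x); rw [e] at this; exact this
      subst e1
      refine ⟨(hinv θ).1 h1, ?_⟩
      exact (him i θ h1 y).2 ⟨x, h2, by rw [e]⟩
    · rintro ⟨h1, h2⟩
      have e1 : θ' = (θ' - (ω : S1)) + (ω : S1) := by simp
      simp only at h1 h2
      have hθ : θ' - (ω : S1) ∈ G := (hinv _).2 (by rwa [← e1])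
      rw [e1] at h2
      obtain ⟨x, hx, e⟩ := (him i _ hθ y).1 h2
      refine ⟨(θ' - (ω : S1), x), ⟨hθ, hx⟩, ?_⟩
      refine Prod.ext ?_ e
      rw [hFω]; exact e1.symm
  have himC : ∀ i, F '' C i = C (i+1) := by
    intro i
    simp only [hC]
    rw [← himE, hF.isClosedMap.closure_image_eq_of_continuous hF]
  have hiter : ∀ n i, F^[n] '' C i = C (i+n) := by
    intro n i
    induction n with
    | zero => simp
    | succ n ih => rw [Function.iterate_succ', image_comp, ih, himC]; rfl
  have hCp : ∀ i, C (i+q) = C i := by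
    intro i
    have : E (i+q) = E i := by
      ext z
      simp only [hE, mem_setOf_eq]
      constructor
      · rintro ⟨h1, h2⟩
        rw [hαp i _ h1, hβp i _ h1] at h2
        exact ⟨h1, h2⟩
      · rintro ⟨h1, h2⟩
        rw [← hαp i _ h1, ← hβp i _ h1] at h2
        exact ⟨h1, h2⟩
    simp only [hC, this]
  have hFn : ∀ n z, (F^[n] z).1 = z.1 + ((n * ω : ℝ) : S1) := by
    intro n z
    induction n with
    | zero => simp
    | succ n ih =>
      rw [Function.iterate_succ_apply', hFω, ih, add_assoc, ← AddCircle.coe_add]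
      congr 2; push_cast; ring
  have hdisj : ∀ i j, ¬ i ≡ j [MOD q] → Disjoint (C i) (C j) := by
    intro i j hij
    rw [disjoint_iff_inter_eq_empty]
    by_contra hne
    have hne : (C i ∩ C j).Nonempty := nonempty_iff_ne_empty.2 hne
    have hZ : Prod.fst '' (C i ∩ C j) = univ := by
      refine closed_inv_univ (ω := q * ω) (hω.natCast_mul (by omega))
        (((hCc i).inter (hCc j)).isCompact.image continuous_fst).isClosed (hne.image _) ?_
      rintro _ ⟨z, ⟨h1, h2⟩, rfl⟩
      refine ⟨F^[q] z, ⟨?_, ?_⟩, hFn q z⟩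
      · rw [← hCp i, ← hiter]; exact mem_image_of_mem _ h1
      · rw [← hCp j, ← hiter]; exact mem_image_of_mem _ h2
    obtain ⟨θ, hθ⟩ := hGd.nonempty
    obtain ⟨⟨θ', x⟩, ⟨h1, h2⟩, rfl⟩ : θ ∈ Prod.fst '' (C i ∩ C j) := by rw [hZ]; trivial
    have h3 := (hfib i θ' hθ x).1 h1
    have h4 := (hfib j θ' hθ x).1 h2
    rcases hord i j hij with h | h
    · have := h θ' hθ; linarith
    · have := h θ' hθ; linarith
  have hMm : ∀ i, ∀ θ ∈ G, mA (C i) θ = α i θ ∧ MA (C i) θ = β i θ := by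
    intro i θ hθ
    obtain ⟨a, b, h1, h2, h3, h4⟩ := hfibI i θ hθ
    rw [← h3, ← h4]
    exact fib_eq h1 h2
  refine ⟨C 0, ⟨hCc 0, hproj 0, G, hG, ?_⟩, ?_, ?_⟩
  · intro θ hθ
    obtain ⟨a, b, h1, h2, -⟩ := hfibI 0 θ hθ
    exact ⟨a, b, h1, h2⟩
  · rw [hiter, hCp]
  · intro i j hij hjq
    rw [hiter, hiter, zero_add, zero_add]
    have hne : ¬ i ≡ j [MOD q] := by
      rw [Nat.ModEq, Nat.mod_eq_of_lt hjq, Nat.mod_eq_of_lt (hij.trans hjq)]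
      omega
    refine ⟨hdisj i j hne, ?_⟩
    rcases hord i j hne with h | h
    · left
      refine ⟨G, hG, fun θ hθ => ?_⟩
      rw [(hMm i θ hθ).2, (hMm j θ hθ).1]; exact h θ hθ
    · right
      refine ⟨G, hG, fun θ hθ => ?_⟩
      rw [(hMm j θ hθ).2, (hMm i θ hθ).1]; exact h θ hθ


/-- main assembly -/
theorem main_thm (F : Cyl → Cyl) (hF : IsQPF F)
    (p : ℕ) (B : Set Cyl) (hB : IsPeriodicStripOrbit F p B)
    (q : ℕ) (hpq : SharkGT p q) :
    ∃ C : Set Cyl, IsPeriodicStripOrbit F q C := by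
  obtain ⟨hFc, ω, hω, hFω⟩ := hF
  obtain ⟨⟨hBc, hBp, GB, hGB, hBI⟩, hBper, hBord⟩ := hB
  obtain ⟨hp2, hq1, -⟩ := shark_cases hpq
  set S : ℕ → Set Cyl := fun i => F^[i] '' B with hS
  have hS1 : ∀ i, F '' S i = S (i+1) := by
    intro i
    simp only [hS]
    rw [Function.iterate_succ', image_comp]
  have hSp : ∀ i, S (i+p) = S i := by
    intro i
    simp only [hS]
    rw [Function.iterate_add, image_comp, hBper]
  have hSc : ∀ i, IsClosed (S i) := fun i => (hBc.isCompact.image (hFc.iterate i)).isClosed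
  have hSproj : ∀ i θ, ∃ x, (θ, x) ∈ S i := by
    intro i
    induction i with
    | zero => intro θ; simpa [hS] using hBp θ
    | succ i ih =>
      intro θ
      obtain ⟨x, hx⟩ := ih (θ - (ω : S1))
      refine ⟨(F (θ - (ω : S1), x)).2, ?_⟩
      rw [← hS1]
      refine ⟨_, hx, Prod.ext ?_ rfl⟩
      rw [hFω]; simp
  -- good set of angles
  have hex : ∀ i j, ∃ G ∈ residual S1, i < p → j < p → i ≠ j →
      (∀ θ ∈ G, MA (S i) θ < mA (S j) θ) ∨ (∀ θ ∈ G, MA (S j) θ < mA (S i) θ) := by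
    intro i j
    by_cases h : i < p ∧ j < p ∧ i ≠ j
    · obtain ⟨hi, hj, hne⟩ := h
      rcases Nat.lt_or_gt_of_ne hne with hlt | hlt
      · rcases (hBord i j hlt hj).2 with ⟨G, hG, h⟩ | ⟨G, hG, h⟩
        · exact ⟨G, hG, fun _ _ _ => Or.inl h⟩
        · exact ⟨G, hG, fun _ _ _ => Or.inr h⟩
      · rcases (hBord j i hlt hi).2 with ⟨G, hG, h⟩ | ⟨G, hG, h⟩
        · exact ⟨G, hG, fun _ _ _ => Or.inr h⟩
        · exact ⟨G, hG, fun _ _ _ => Or.inl h⟩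
    · exact ⟨univ, Filter.univ_mem, fun a b c => absurd ⟨a, b, c⟩ h⟩
  choose GG hGG hGo using hex
  have hGr : GB ∩ (⋂ i, ⋂ j, GG i j) ∈ residual S1 := Filter.inter_mem hGB
    (countable_iInter_mem.2 fun i => countable_iInter_mem.2 fun j => hGG i j)
  obtain ⟨H, hHsub, hHr, hHm, hHinv⟩ := inv_resid hGr (ω : S1)
  have hHo : ∀ i j, i < p → j < p → i ≠ j →
      (∀ θ ∈ H, MA (S i) θ < mA (S j) θ) ∨ (∀ θ ∈ H, MA (S j) θ < mA (S i) θ) := by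
    intro i j hi hj hne
    rcases hGo i j hi hj hne with h | h
    · left; intro θ hθ; exact h θ (mem_iInter.1 (mem_iInter.1 (hHsub hθ).2 i) j)
    · right; intro θ hθ; exact h θ (mem_iInter.1 (mem_iInter.1 (hHsub hθ).2 i) j)
  have hconn : ∀ i, ∀ θ ∈ H, IsPreconnected (fiber (S i) θ) := by
    intro i
    induction i with
    | zero =>
      intro θ hθ
      obtain ⟨a, b, -, h⟩ := hBI θ (hHsub hθ).1
      have : S 0 = B := by simp [hS]
      rw [this, h]
      exact ordConnected_Icc.isPreconnected
    | succ i ih =>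
      intro θ hθ
      have hθ' : θ - (ω : S1) ∈ H := (hHinv _).2 (by simpa using hθ)
      have : fiber (S (i+1)) θ = (fun x => (F (θ - (ω : S1), x)).2) '' fiber (S i) (θ - (ω : S1)) := by
        ext y
        simp only [fiber, mem_setOf_eq, mem_image]
        rw [← hS1]
        constructor
        · rintro ⟨⟨θ1, x⟩, hx, e⟩
          have e1 := hFω (θ1, x)
          rw [e] at e1
          have e2 : θ - (ω : S1) = θ1 := by simp at e1; rw [e1]; simp
          rw [e2]
          exact ⟨x, hx, by rw [e]⟩
        · rintro ⟨x, hx, e⟩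
          refine ⟨_, hx, Prod.ext ?_ e⟩
          rw [hFω]; simp
      rw [this]
      exact (ih _ hθ').image _ (by fun_prop)
  have hspec := fun i θ => mA_spec (hSc i) (hSproj i θ)
  have hmM' : ∀ i θ, mA (S i) θ ≤ MA (S i) θ := by
    intro i θ
    obtain ⟨⟨x, hx, e⟩, -, h⟩ := hspec i θ
    exact (h x hx).1.trans (h x hx).2
  have hb0 : ∀ i θ, 0 ≤ mA (S i) θ := by
    intro i θ
    obtain ⟨⟨x, hx, e⟩, -, -⟩ := hspec i θ
    rw [← e]; exact x.2.1
  have hb1 : ∀ i θ, MA (S i) θ ≤ 1 := by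
    intro i θ
    obtain ⟨-, ⟨x, hx, e⟩, -⟩ := hspec i θ
    rw [← e]; exact x.2.2
  have hfill : ∀ i, ∀ θ ∈ H, ∀ x : II, mA (S i) θ ≤ x → (x:ℝ) ≤ MA (S i) θ → (θ, x) ∈ S i := by
    intro i θ hθ x h1 h2
    obtain ⟨⟨a, ha, ea⟩, ⟨b, hb, eb⟩, -⟩ := hspec i θ
    have := (hconn i θ hθ).ordConnected.out ha hb
    rw [← ea] at h1
    rw [← eb] at h2
    exact this ⟨h1, h2⟩
  -- the spatial ordering
  have hp0 : 0 < p := by omega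
  obtain ⟨θ0, hθ0⟩ := (dense_of_mem_residual hHr).nonempty
  set σ : Equiv.Perm (Fin p) := Tuple.sort (fun i : Fin p => mA (S i) θ0) with hσ
  have hmono : Monotone ((fun i : Fin p => mA (S i) θ0) ∘ σ) := Tuple.monotone_sort _
  set s : ℕ → ℕ := fun k => if h : k < p then (σ ⟨k, h⟩ : ℕ) else 0 with hsd
  set r : ℕ → ℕ := fun i => (σ.symm ⟨i % p, Nat.mod_lt _ hp0⟩ : ℕ) with hrd
  have hsk : ∀ k (h : k < p), s k = σ ⟨k, h⟩ := fun k h => dif_pos h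
  have hs_lt : ∀ k, s k < p := by
    intro k
    simp only [hsd]
    split_ifs
    · exact Fin.is_lt _
    · exact hp0
  have hr_lt : ∀ i, r i < p := fun i => Fin.is_lt _
  have hsr : ∀ i, s (r i) = i % p := by
    intro i
    rw [hsk _ (hr_lt i)]
    simp [hrd]
  have hrs : ∀ k, k < p → r (s k) = k := by
    intro k hk
    have e : (⟨s k % p, Nat.mod_lt _ hp0⟩ : Fin p) = σ ⟨k, hk⟩ := by
      apply Fin.ext
      rw [← hsk k hk]
      exact Nat.mod_eq_of_lt (hs_lt k)
    simp only [hrd]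
    rw [e]
    simp
  have hrmod : ∀ i j, r i = r j ↔ i ≡ j [MOD p] := by
    intro i j
    constructor
    · intro h
      have := congrArg s h
      rwa [hsr, hsr] at this
    · intro h
      have h : i % p = j % p := h
      simp only [hrd, h]
  set t : ℕ → ℕ := fun k => r (s k + 1) with htd
  have htr : ∀ i, t (r i) = r (i+1) := by
    intro i
    simp only [htd]
    rw [hrmod, hsr]
    exact (Nat.mod_modEq i p).add_right 1
  have hit : ∀ j, t^[j] 0 = r (s 0 + j) := by
    intro j
    induction j with
    | zero => simp [hrs 0 hp0]
    | succ j ih => rw [Function.iterate_succ_apply', ih, htr]; rfl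
  have hSmod : ∀ i, S (i % p) = S i := fun i => per_mod hSp i
  have hPt : ∀ k, F '' S (s k) = S (s (t k)) := by
    intro k
    rw [hS1]
    simp only [htd]
    rw [hsr, hSmod]
  have hord : ∀ k l, k < l → l < p → ∀ θ ∈ H, MA (S (s k)) θ < mA (S (s l)) θ := by
    intro k l hkl hl
    have hk : k < p := by omega
    have hne : s k ≠ s l := by
      intro e
      have := congrArg r e
      rw [hrs k hk, hrs l hl] at this
      omega
    rcases hHo _ _ (hs_lt k) (hs_lt l) hne with h | h
    · exact h
    · exfalso
      have h1 := h θ0 hθ0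
      have h2 : mA (S (s k)) θ0 ≤ mA (S (s l)) θ0 := by
        have := hmono (show (⟨k, hk⟩ : Fin p) ≤ ⟨l, hl⟩ from hkl.le)
        simp only [Function.comp] at this
        rwa [← hsk, ← hsk] at this
      have := hmM' (s l) θ0
      linarith
  -- the fiberwise theorem on H
  set R : H → H := fun θ => ⟨(θ : S1) + (ω : S1), (hHinv θ).1 θ.2⟩ with hR
  have hRc : Continuous R := by
    apply Continuous.subtype_mk
    exact (continuous_add_right _).comp continuous_subtype_val
  set g : H → ℝ → ℝ := fun θ x => ((F ((θ : S1), projIcc 0 1 zero_le_one x)).2 : ℝ) with hg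
  have hgc : Continuous (Function.uncurry g) := by
    have h1 : Continuous fun z : H × ℝ => (((z.1 : S1), projIcc 0 1 zero_le_one z.2) : Cyl) :=
      (continuous_subtype_val.comp continuous_fst).prodMk (continuous_projIcc.comp continuous_snd)
    exact continuous_subtype_val.comp (continuous_snd.comp (hFc.comp h1))
  obtain ⟨α, β, hα, hβ, hαp, hβp, hαβ, him, hlt⟩ := fiberwise (X := H) hRc.measurable hgc
    (m := fun k θ => mA (S (s k)) θ) (M := fun k θ => MA (S (s k)) θ) (p := p) (q := q) (t := t)
    (fun k => (mA_meas (hSc _) (hSproj _)).comp measurable_subtype_coe)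
    (fun k => (MA_meas (hSc _) (hSproj _)).comp measurable_subtype_coe)
    (fun k _ => hr_lt _)
    (by
      intro i j
      rw [hit, hit, hrmod]
      exact ⟨fun h => Nat.ModEq.add_left_cancel' _ h, fun h => h.add_left _⟩)
    (by
      intro k hk
      refine ⟨s k + (p - s 0), ?_⟩
      rw [hit]
      have e : s 0 + (s k + (p - s 0)) = s k + p := by have := hs_lt 0; omega
      rw [e]
      have e2 : r (s k + p) = r (s k) := by rw [hrmod]; simp [Nat.ModEq]
      rw [e2, hrs k hk])
    hpq (fun k _ θ => hmM' _ _) (fun k l hkl hl θ => hord k l hkl hl θ θ.2)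
    (by
      intro k hk θ x hx
      have hx01 : x ∈ Icc (0:ℝ) 1 := ⟨(hb0 _ _).trans hx.1, hx.2.trans (hb1 _ _)⟩
      have h1 : ((θ : S1), (⟨x, hx01⟩ : II)) ∈ S (s k) := hfill _ θ θ.2 _ hx.1 hx.2
      have h2 : F ((θ : S1), (⟨x, hx01⟩ : II)) ∈ S (s (t k)) := by
        rw [← hPt]; exact mem_image_of_mem _ h1
      have h3 : ((θ : S1) + (ω : S1), (F ((θ : S1), (⟨x, hx01⟩ : II))).2) ∈ S (s (t k)) := by
        rw [← hFω ((θ : S1), (⟨x, hx01⟩ : II))]; exact h2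
      have h4 := (hspec (s (t k)) ((θ : S1) + (ω : S1))).2.2 _ h3
      simp only [hg, hR]
      rw [projIcc_of_mem _ hx01]
      exact h4)
  -- extend to the circle
  have hme : MeasurableEmbedding (Subtype.val : H → S1) := MeasurableEmbedding.subtype_coe hHm
  have exα : ∀ i, ∃ a : S1 → ℝ, Measurable a ∧ a ∘ Subtype.val = α i := fun i =>
    hme.exists_measurable_extend (hα i) fun _ => ⟨0⟩
  have exβ : ∀ i, ∃ a : S1 → ℝ, Measurable a ∧ a ∘ Subtype.val = β i := fun i =>
    hme.exists_measurable_extend (hβ i) fun _ => ⟨0⟩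
  choose a ham hae using exα
  choose b hbm hbe using exβ
  have hae' : ∀ i θ (h : θ ∈ H), a i θ = α i ⟨θ, h⟩ := fun i θ h => congrFun (hae i) ⟨θ, h⟩
  have hbe' : ∀ i θ (h : θ ∈ H), b i θ = β i ⟨θ, h⟩ := fun i θ h => congrFun (hbe i) ⟨θ, h⟩
  choose G1 hG1 hG1c using fun i => resid_cont (ham i)
  choose G2 hG2 hG2c using fun i => resid_cont (hbm i)
  have hKr : H ∩ ((⋂ i, G1 i) ∩ ⋂ i, G2 i) ∈ residual S1 := Filter.inter_mem hHr
    (Filter.inter_mem (countable_iInter_mem.2 hG1) (countable_iInter_mem.2 hG2))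
  obtain ⟨K, hKsub, hK, -, hKinv⟩ := inv_resid hKr (ω : S1)
  have hKH : ∀ θ ∈ K, θ ∈ H := fun θ h => (hKsub h).1
  have hbd : ∀ i θ (h : θ ∈ H), 0 ≤ a i θ ∧ a i θ ≤ b i θ ∧ b i θ ≤ 1 := by
    intro i θ h
    rw [hae' i θ h, hbe' i θ h]
    obtain ⟨h1, h2, h3⟩ := hαβ i ⟨θ, h⟩
    exact ⟨(hb0 _ _).trans h1, h2, h3.trans (hb1 _ _)⟩
  refine strips_of hFc hω hFω hK hKinv hq1 (α := a) (β := b) ?_ ?_ ?_ ?_ ?_ ?_ ?_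
  · exact fun i => (hG1c i).mono fun θ h => mem_iInter.1 (hKsub h).2.1 i
  · exact fun i => (hG2c i).mono fun θ h => mem_iInter.1 (hKsub h).2.2 i
  · intro i θ h
    rw [hae' _ θ (hKH θ h), hae' _ θ (hKH θ h), hαp]
  · intro i θ h
    rw [hbe' _ θ (hKH θ h), hbe' _ θ (hKH θ h), hβp]
  · exact fun i θ h => hbd i θ (hKH θ h)
  · intro i θ h y
    have hθ := hKH θ h
    have hθ' : θ + (ω : S1) ∈ H := (hHinv θ).1 hθ
    have h1 := him i ⟨θ, hθ⟩
    have h2 : (a (i+1) (θ + (ω : S1)) ≤ y ∧ (y:ℝ) ≤ b (i+1) (θ + (ω : S1))) ↔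
        (y:ℝ) ∈ Icc (α (i+1) (R ⟨θ, hθ⟩)) (β (i+1) (R ⟨θ, hθ⟩)) := by
      rw [hae' _ _ hθ', hbe' _ _ hθ']; rfl
    rw [h2, ← h1]
    constructor
    · rintro ⟨x, hx, e⟩
      rw [← hae' i θ hθ, ← hbe' i θ hθ] at hx
      obtain ⟨c1, c2, c3⟩ := hbd i θ hθ
      have hx01 : x ∈ Icc (0:ℝ) 1 := ⟨c1.trans hx.1, hx.2.trans c3⟩
      refine ⟨⟨x, hx01⟩, hx, ?_⟩
      simp only [hg] at e
      rw [projIcc_of_mem _ hx01] at e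
      exact Subtype.ext e
    · rintro ⟨x, hx, e⟩
      rw [hae' i θ hθ, hbe' i θ hθ] at hx
      refine ⟨x, hx, ?_⟩
      simp only [hg]
      rw [projIcc_val, e]
  · intro i j hij
    rcases hlt i j hij with h | h
    · left
      intro θ hθ
      rw [hae' _ _ (hKH θ hθ), hbe' _ _ (hKH θ hθ)]
      exact h _
    · right
      intro θ hθ
      rw [hae' _ _ (hKH θ hθ), hbe' _ _ (hKH θ hθ)]
      exact h _

/-- Sharkovskiĭ theorem for `S(Ω)`. -/
theorem sharkovskii_for_SOmega (F : Cyl → Cyl) (hF : IsQPF F)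
    (p : ℕ) (B : Set Cyl) (hB : IsPeriodicStripOrbit F p B)
    (q : ℕ) (hpq : SharkGT p q) :
    ∃ C : Set Cyl, IsPeriodicStripOrbit F q C := by
  exact main_thm F hF p B hB q hpq
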